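/- Let X = {(R₋,S₋,R₊,S₊) ∈ SU(2)⁴ : R₋S₋R₋⁻¹S₋⁻¹R₊S₊R₊⁻¹S₊⁻¹ = 1}, topologized as a subspace of ℍ⁴, and let χ(F₂) be the quotient of X, with the quotient topology, by the action of SU(2) by simultaneous conjugation. Then χ(F₂) is a compact Hausdorff space and every point of χ(F₂) has an open neighborhood homeomorphic to ℝ⁶; that is, χ(F₂) is a closed topological 6-manifold. -/

import Mathlib

noncomputable section

/-- The condition defining the representation space of the genus two surface group:
quadruples `(R₋, S₋, R₊, S₊)` of unit quaternions (elements of `SU(2)`) satisfying the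
genus two surface relation `[R₋,S₋][R₊,S₊] = 1`. -/
def memX (t : Quaternion ℝ × Quaternion ℝ × Quaternion ℝ × Quaternion ℝ) : Prop :=
  ‖t.1‖ = 1 ∧ ‖t.2.1‖ = 1 ∧ ‖t.2.2.1‖ = 1 ∧ ‖t.2.2.2‖ = 1 ∧
    t.1 * t.2.1 * t.1⁻¹ * t.2.1⁻¹ * (t.2.2.1 * t.2.2.2 * t.2.2.1⁻¹ * t.2.2.2⁻¹) = 1

/-- The representation space `X ⊂ ℍ⁴`, with the subspace topology. -/
abbrev GenusTwoRepSpace : Type := {t // memX t}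

/-- Two points of `X` are related iff they are simultaneously conjugate by a unit
quaternion `u ∈ SU(2)`. -/
def conjRel (s t : GenusTwoRepSpace) : Prop :=
  ∃ u : Quaternion ℝ, ‖u‖ = 1 ∧
    t.1.1 = u * s.1.1 * u⁻¹ ∧ t.1.2.1 = u * s.1.2.1 * u⁻¹ ∧
    t.1.2.2.1 = u * s.1.2.2.1 * u⁻¹ ∧ t.1.2.2.2 = u * s.1.2.2.2 * u⁻¹

/-- The `SU(2)` character variety `χ(F₂)` of the genus two surface: the quotient of `X`
by simultaneous conjugation, with the quotient topology. -/
abbrev ChiF2 : Type := Quot conjRel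

/-!
A change of variables turns the relation into `abcd = dcba`. It forces the imaginary parts of
`a, b, c, d` to be coplanar, so that up to conjugation none of them has a `k`-component, and then
the relation is the single equation `Im_k (abcd) = 0`. Hence `χ(F₂)` is the space of quadruples of
nonzero vectors of `ℝ × ℂ` in the zero set of a multilinear form, up to `O(2)` and positive scaling.
It is Hausdorff since real parts and inner products of imaginary parts are invariants that separate
conjugacy classes.

At central quadruples, suitable slope coordinates turn the equation into equality of the norms of
two binary linear forms over `ℂ`, and the product of the two forms identifies the quotient by `O(2)`
with the space `ℂ³` of binary quadratic forms. At the other points, one non-real entry is rotated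
to a fixed direction and the equation is solved for another entry. This uses up `O(2)` except for
one reflection, which either is excluded nearby or acts by `z ↦ -z` on a factor `ℂ` of the chart,
whose quotient is again `ℂ` through `z ↦ z ^ 2`. The equation can be solved because its
derivatives in the other entries do not all vanish, by a computation in `ℍˣ` modulo its centre.
-/

open Topology Set
open scoped ComplexConjugate

section LocallyEuclidean

variable {χ O M : Type*} [TopologicalSpace χ] [TopologicalSpace O] [TopologicalSpace M] {n : ℕ}

/-- `x` is a manifold point of dimension `n`: it has an open neighbourhood homeomorphic to `ℝⁿ`.
Mathlib's `ChartedSpace` only asks for neighbourhoods homeomorphic to open subsets of `ℝⁿ`. -/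
def IsLocallyEuclideanAt (n : ℕ) (x : χ) : Prop :=
  ∃ U : Set χ, x ∈ U ∧ IsOpen U ∧ Nonempty (U ≃ₜ (Fin n → ℝ))

lemma isLocallyEuclideanAt_of_isOpenEmbedding {e : (Fin n → ℝ) → χ} (he : IsOpenEmbedding e)
    (y : Fin n → ℝ) : IsLocallyEuclideanAt n (e y) :=
  ⟨range e, mem_range_self y, he.isOpen_range, ⟨he.isEmbedding.toHomeomorph.symm⟩⟩

lemma IsLocallyEuclideanAt.map {x : M} (hx : IsLocallyEuclideanAt n x) {j : M → χ}
    (hj : IsOpenEmbedding j) : IsLocallyEuclideanAt n (j x) := by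
  obtain ⟨U, hxU, hU, ⟨e⟩⟩ := hx
  have h := (hj.comp hU.isOpenEmbedding_subtypeVal).comp e.symm.isOpenEmbedding
  simpa using isLocallyEuclideanAt_of_isOpenEmbedding h (e ⟨x, hxU⟩)

lemma isLocallyEuclideanAt_of_isOpen {E : Type*} [NormedAddCommGroup E] [NormedSpace ℝ E]
    [FiniteDimensional ℝ E] (hE : Module.finrank ℝ E = n) {W : Set E} (hW : IsOpen W) (w : W) :
    IsLocallyEuclideanAt n w := by
  obtain ⟨ε, hε, hball⟩ := Metric.isOpen_iff.1 hW w w.2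
  let b := OpenPartialHomeomorph.univBall (w : E) ε
  let L : (Fin n → ℝ) ≃L[ℝ] E := ContinuousLinearEquiv.ofFinrankEq (by simp [hE])
  have hmem (y : E) : b y ∈ W := hball <| by
    simpa [b, OpenPartialHomeomorph.univBall_target _ hε] using b.map_source (x := y) (by simp [b])
  have hb : IsOpenEmbedding fun y ↦ (⟨b y, hmem y⟩ : W) :=
    .of_comp _ hW.isOpenEmbedding_subtypeVal (b.isOpenEmbedding (by simp [b]))
  simpa [b] using isLocallyEuclideanAt_of_isOpenEmbedding
    (hb.comp L.toHomeomorph.isOpenEmbedding) (L.symm 0)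

lemma exists_isOpenEmbedding_of_isQuotientMap {s : O → M} (hs : IsQuotientMap s) {g : O → χ}
    (hg : Continuous g) (hgo : IsOpenMap g) (hgs : ∀ a b, g a = g b ↔ s a = s b) :
    ∃ j : M → χ, IsOpenEmbedding j ∧ ∀ a, j (s a) = g a := by
  let q : C(O, M) := ⟨s, hs.continuous⟩
  have hfac : Function.FactorsThrough (⟨g, hg⟩ : C(O, χ)) q := fun a b h ↦ (hgs a b).2 h
  let j : C(M, χ) := IsQuotientMap.lift (f := q) hs _ hfac
  have hj (a : O) : j (s a) = g a := DFunLike.congr_fun (IsQuotientMap.lift_comp hs _ hfac) a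
  refine ⟨j, .of_continuous_injective_isOpenMap j.continuous ?_ fun W hW ↦ ?_, hj⟩
  · intro x y h
    obtain ⟨a, rfl⟩ := hs.surjective x
    obtain ⟨b, rfl⟩ := hs.surjective y
    rwa [hj, hj, hgs] at h
  · have himage : j '' W = g '' (s ⁻¹' W) := by
      rw [← funext hj, ← image_image j s, image_preimage_eq W hs.surjective]
    rw [himage]
    exact hgo _ (hW.preimage hs.continuous)

lemma isLocallyEuclideanAt_of_isOpenMap {E : Type*} [NormedAddCommGroup E] [NormedSpace ℝ E]
    [FiniteDimensional ℝ E] (hE : Module.finrank ℝ E = n) {s : O → E} (hs : Continuous s)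
    (hso : IsOpenMap s) {g : O → χ} (hg : Continuous g) (hgo : IsOpenMap g)
    (hgs : ∀ a b, g a = g b ↔ s a = s b) (o : O) : IsLocallyEuclideanAt n (g o) := by
  have hquot : IsQuotientMap (rangeFactorization s) :=
    (hso.subtype_mk mem_range_self).isQuotientMap hs.rangeFactorization
      rangeFactorization_surjective
  obtain ⟨j, hj, hjs⟩ := exists_isOpenEmbedding_of_isQuotientMap hquot hg hgo fun a b ↦
    ⟨fun h ↦ Subtype.ext ((hgs a b).1 h), fun h ↦ (hgs a b).2 (congrArg Subtype.val h)⟩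
  rw [← hjs]
  exact (isLocallyEuclideanAt_of_isOpen hE hso.isOpen_range _).map hj

lemma isOpenMap_comp_of_retraction {Z : Type*} [TopologicalSpace Z] {ψ : Z → χ} (hψ : IsOpenMap ψ)
    {D : Set Z} (hD : IsOpen D) {G : O → D} {r : D → O} (hr : Continuous r)
    (hrG : Function.LeftInverse r G) (hGr : ∀ z, ψ (G (r z)) = ψ z) :
    IsOpenMap fun o ↦ ψ (G o) := by
  intro U hU
  have himage : (fun o ↦ ψ (G o)) '' U = (fun z : D ↦ ψ z) '' (r ⁻¹' U) := by
    ext x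
    constructor
    · rintro ⟨o, ho, rfl⟩
      exact ⟨G o, by rwa [mem_preimage, hrG], rfl⟩
    · rintro ⟨z, hz, rfl⟩
      exact ⟨r z, hz, hGr z⟩
  rw [himage]
  exact (hψ.comp hD.isOpenMap_subtype_val) _ (hU.preimage hr)

end LocallyEuclidean

section Gram

variable {ι E : Type*} [NormedAddCommGroup E] [InnerProductSpace ℝ E]

lemma norm_linearCombination_eq_of_inner_eq {z w : ι → E}
    (h : ∀ i j, inner ℝ (z i) (z j) = inner ℝ (w i) (w j)) (c : ι →₀ ℝ) :
    ‖Finsupp.linearCombination ℝ z c‖ = ‖Finsupp.linearCombination ℝ w c‖ := by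
  have hsq : ‖Finsupp.linearCombination ℝ z c‖ ^ 2 = ‖Finsupp.linearCombination ℝ w c‖ ^ 2 := by
    simp only [← real_inner_self_eq_norm_sq, Finsupp.linearCombination_apply, Finsupp.sum,
      sum_inner, inner_sum, inner_smul_left, inner_smul_right, h]
  exact (sq_eq_sq₀ (norm_nonneg _) (norm_nonneg _)).1 hsq

lemma exists_linearIsometryEquiv_of_inner_eq [FiniteDimensional ℝ E] {z w : ι → E}
    (h : ∀ i j, inner ℝ (z i) (z j) = inner ℝ (w i) (w j)) :
    ∃ g : E ≃ₗᵢ[ℝ] E, ∀ i, g (z i) = w i := by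
  let Z := Finsupp.linearCombination ℝ z
  let W := Finsupp.linearCombination ℝ w
  have hnorm := norm_linearCombination_eq_of_inner_eq h
  have hker : LinearMap.ker Z ≤ LinearMap.ker W := fun c hc ↦ by
    rw [LinearMap.mem_ker] at hc ⊢
    rw [← norm_eq_zero, ← hnorm c, norm_eq_zero]
    exact hc
  let L : LinearMap.range Z →ₗ[ℝ] E :=
    (LinearMap.ker Z).liftQ W hker ∘ₗ Z.quotKerEquivRange.symm
  have hL (c : ι →₀ ℝ) : L (Z.rangeRestrict c) = W c := by
    have : Z.quotKerEquivRange.symm (Z.rangeRestrict c) = (LinearMap.ker Z).mkQ c :=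
      Z.quotKerEquivRange.symm_apply_eq.2 rfl
    simp only [L, LinearMap.comp_apply, LinearEquiv.coe_coe, this]
    rfl
  let iso : LinearMap.range Z →ₗᵢ[ℝ] E := ⟨L, by
    rintro ⟨_, c, rfl⟩
    exact (congrArg norm (hL c)).trans (hnorm c).symm⟩
  refine ⟨iso.extend.toLinearIsometryEquiv rfl, fun i ↦ ?_⟩
  have hi : Z (Finsupp.single i 1) = z i := by simp [Z]
  calc iso.extend (z i) = iso.extend (Z.rangeRestrict (Finsupp.single i 1)) := by
        exact congrArg iso.extend hi.symm
    _ = L (Z.rangeRestrict (Finsupp.single i 1)) := iso.extend_apply _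
    _ = w i := by simp [hL, W]

end Gram

section BinaryForms

/-- A binary linear form `ℓ.1 X + ℓ.2 Y` over `ℂ`, given by its coefficients. -/
abbrev LinearForm : Type := ℂ × ℂ

/-- The coefficients of `X²`, `XY`, `Y²` in the product of two binary linear forms. -/
def formMul (x : LinearForm × LinearForm) : ℂ × ℂ × ℂ :=
  (x.1.1 * x.2.1, x.1.1 * x.2.2 + x.1.2 * x.2.1, x.1.2 * x.2.2)

/-- The squared Hermitian norm of a linear form. -/
def formNormSq (ℓ : LinearForm) : ℝ := Complex.normSq ℓ.1 + Complex.normSq ℓ.2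

/-- Pairs of linear forms of equal Hermitian norm; every product of two forms has such a
factorization, unique up to the action of `O(2)`. -/
abbrev BalancedForms : Type := {x : LinearForm × LinearForm // formNormSq x.1 = formNormSq x.2}

lemma formNormSq_smul (t : ℂ) (ℓ : LinearForm) :
    formNormSq (t • ℓ) = Complex.normSq t * formNormSq ℓ := by
  simp only [formNormSq, Prod.smul_fst, Prod.smul_snd, smul_eq_mul, map_mul]
  ring

lemma formNormSq_eq_zero {ℓ : LinearForm} : formNormSq ℓ = 0 ↔ ℓ = 0 := by
  rw [formNormSq, add_eq_zero_iff_of_nonneg (Complex.normSq_nonneg _) (Complex.normSq_nonneg _),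
    Complex.normSq_eq_zero, Complex.normSq_eq_zero, Prod.ext_iff, Prod.fst_zero, Prod.snd_zero]

lemma formNormSq_pos {ℓ : LinearForm} (hℓ : ℓ ≠ 0) : 0 < formNormSq ℓ :=
  (add_nonneg (Complex.normSq_nonneg _) (Complex.normSq_nonneg _)).lt_of_ne'
    (formNormSq_eq_zero.not.2 hℓ)

lemma formMul_eq_zero {ℓ m : LinearForm} : formMul (ℓ, m) = 0 ↔ ℓ = 0 ∨ m = 0 := by
  constructor
  · intro h
    simp only [formMul, Prod.mk_eq_zero] at h
    obtain ⟨h₁, h₂, h₃⟩ := h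
    by_contra! hne
    obtain ⟨hℓ, hm⟩ := hne
    rcases mul_eq_zero.1 h₁ with h | h <;> rcases mul_eq_zero.1 h₃ with h' | h' <;>
      simp_all [Prod.ext_iff]
  · rintro (rfl | rfl) <;> simp [formMul]

lemma formMul_smul_smul (s t : ℂ) (ℓ m : LinearForm) :
    formMul (s • ℓ, t • m) = (s * t) • formMul (ℓ, m) := by
  simp only [formMul, Prod.smul_fst, Prod.smul_snd, smul_eq_mul, Prod.smul_mk]
  ext <;> ring

lemma formMul_swap (ℓ m : LinearForm) : formMul (m, ℓ) = formMul (ℓ, m) := by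
  simp only [formMul]
  ext <;> ring

lemma formMul_sub (ℓ m m' : LinearForm) :
    formMul (ℓ, m - m') = formMul (ℓ, m) - formMul (ℓ, m') := by
  simp only [formMul, Prod.fst_sub, Prod.snd_sub, Prod.mk_sub_mk]
  ext <;> ring

lemma exists_smul_of_det_eq_zero {ℓ m : LinearForm} (hm : m ≠ 0)
    (h : m.1 * ℓ.2 - m.2 * ℓ.1 = 0) : ∃ t : ℂ, ℓ = t • m := by
  rcases not_and_or.1 (Prod.ext_iff.not.1 hm) with h₁ | h₂
  · refine ⟨ℓ.1 / m.1, Prod.ext (by simp_all) ?_⟩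
    simp only [Prod.fst_zero] at h₁
    simp only [Prod.smul_snd, smul_eq_mul]
    field_simp
    linear_combination h
  · refine ⟨ℓ.2 / m.2, Prod.ext ?_ (by simp_all)⟩
    simp only [Prod.snd_zero] at h₂
    simp only [Prod.smul_fst, smul_eq_mul]
    field_simp
    linear_combination -h

lemma exists_smul_of_formMul_eq {ℓ m ℓ' m' : LinearForm} (hℓ' : ℓ' ≠ 0)
    (h : formMul (ℓ, m) = formMul (ℓ', m')) : (∃ t : ℂ, ℓ = t • ℓ') ∨ ∃ t : ℂ, m = t • ℓ' := by
  simp only [formMul, Prod.mk.injEq] at h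
  obtain ⟨h₁, h₂, h₃⟩ := h
  -- Up to sign this is the product form evaluated at the root `(ℓ'.2, -ℓ'.1)` of `ℓ'`.
  have hroot : (ℓ'.1 * ℓ.2 - ℓ'.2 * ℓ.1) * (ℓ'.1 * m.2 - ℓ'.2 * m.1) = 0 := by
    linear_combination ℓ'.1 ^ 2 * h₃ - ℓ'.1 * ℓ'.2 * h₂ + ℓ'.2 ^ 2 * h₁
  exact (mul_eq_zero.1 hroot).imp (exists_smul_of_det_eq_zero hℓ') (exists_smul_of_det_eq_zero hℓ')

lemma exists_unit_of_formMul_smul_eq {t : ℂ} {m ℓ' m' : LinearForm} (hℓ' : ℓ' ≠ 0)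
    (h : formMul (t • ℓ', m) = formMul (ℓ', m')) (hx : formNormSq (t • ℓ') = formNormSq m)
    (hx' : formNormSq ℓ' = formNormSq m') :
    ∃ u : ℂ, ‖u‖ = 1 ∧ ℓ' = u • t • ℓ' ∧ m' = conj u • m := by
  have hm : m' = t • m := by
    have hmul : formMul (ℓ', t • m) = formMul (t • ℓ', m) := by
      simp only [formMul, Prod.smul_fst, Prod.smul_snd, smul_eq_mul]
      ext <;> ring
    have hzero : formMul (ℓ', t • m - m') = 0 := by rw [formMul_sub, hmul, h, sub_self]
    exact (sub_eq_zero.1 ((formMul_eq_zero.1 hzero).resolve_left hℓ')).symm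
  have ht : Complex.normSq t = 1 := by
    rw [formNormSq_smul] at hx
    rw [hm, formNormSq_smul, ← hx, ← mul_assoc, ← sq, eq_comm,
      mul_eq_right₀ (formNormSq_pos hℓ').ne'] at hx'
    exact (pow_eq_one_iff_of_nonneg (Complex.normSq_nonneg t) two_ne_zero).1 hx'
  refine ⟨conj t, ?_, ?_, ?_⟩
  · rw [RCLike.norm_conj, Complex.norm_def, ht, Real.sqrt_one]
  · rw [smul_smul, mul_comm, Complex.mul_conj, ht, Complex.ofReal_one, one_smul]
  · rw [Complex.conj_conj, hm]

lemma formMul_eq_iff (x x' : BalancedForms) :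
    formMul x.1 = formMul x'.1 ↔ ∃ u : ℂ, ‖u‖ = 1 ∧
      (x'.1 = (u • x.1.1, conj u • x.1.2) ∨ x'.1 = (u • x.1.2, conj u • x.1.1)) := by
  obtain ⟨⟨ℓ, m⟩, hx⟩ := x
  obtain ⟨⟨ℓ', m'⟩, hx'⟩ := x'
  dsimp only at hx hx' ⊢
  constructor
  · intro h
    by_cases hℓ' : ℓ' = 0
    · have hm' : m' = 0 := formNormSq_eq_zero.1 (hx'.symm.trans (formNormSq_eq_zero.2 hℓ'))
      have hℓm : ℓ = 0 ∧ m = 0 := by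
        rw [← formNormSq_eq_zero (ℓ := ℓ), ← formNormSq_eq_zero (ℓ := m), ← hx, and_self]
        rcases formMul_eq_zero.1 (h.trans (formMul_eq_zero.2 (.inl hℓ'))) with hℓ | hm
        · exact formNormSq_eq_zero.2 hℓ
        · exact hx.trans (formNormSq_eq_zero.2 hm)
      exact ⟨1, norm_one, .inl (by simp [hℓm, hℓ', hm'])⟩
    · rcases exists_smul_of_formMul_eq hℓ' h with ⟨t, rfl⟩ | ⟨t, rfl⟩
      · obtain ⟨u, hu, hl, hm⟩ := exists_unit_of_formMul_smul_eq hℓ' h hx hx'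
        exact ⟨u, hu, .inl (Prod.ext hl hm)⟩
      · rw [← formMul_swap] at h
        obtain ⟨u, hu, hl, hm⟩ := exists_unit_of_formMul_smul_eq hℓ' h hx.symm hx'
        exact ⟨u, hu, .inr (Prod.ext hl hm)⟩
  · rintro ⟨u, hu, h⟩
    have huu : u * conj u = 1 := by rw [Complex.mul_conj, Complex.normSq_eq_norm_sq, hu]; simp
    rcases h with h | h <;> rw [h, formMul_smul_smul, huu, one_smul]
    rw [formMul_swap]

lemma exists_formMul_eq (P : ℂ × ℂ × ℂ) : ∃ x, formMul x = P := by
  obtain ⟨a, b, c⟩ := P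
  by_cases ha : a = 0
  · exact ⟨((0, 1), (b, c)), by simp [formMul, ha]⟩
  · obtain ⟨s, hs⟩ := IsAlgClosed.exists_pow_nat_eq (b ^ 2 - 4 * a * c) two_pos
    refine ⟨((a, (b + s) / 2), (1, (b - s) / (2 * a))), ?_⟩
    simp only [formMul, Prod.mk.injEq]
    refine ⟨mul_one a, by field_simp; ring, ?_⟩
    field_simp
    linear_combination -hs

lemma exists_balancedForms_formMul_eq (P : ℂ × ℂ × ℂ) : ∃ x : BalancedForms, formMul x.1 = P := by
  obtain ⟨⟨ℓ, m⟩, rfl⟩ := exists_formMul_eq P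
  by_cases h : ℓ = 0 ∨ m = 0
  · exact ⟨⟨(0, 0), rfl⟩, (formMul_eq_zero.2 (.inl rfl)).trans (formMul_eq_zero.2 h).symm⟩
  · rw [not_or] at h
    have hℓ := formNormSq_pos h.1
    have hm := formNormSq_pos h.2
    set r : ℝ := √√(formNormSq m / formNormSq ℓ)
    have hr : 0 < r := by positivity
    have hr4 : r ^ 4 = formNormSq m / formNormSq ℓ := by
      rw [show 4 = 2 * 2 from rfl, pow_mul, Real.sq_sqrt (by positivity),
        Real.sq_sqrt (by positivity)]
    refine ⟨⟨((r : ℂ) • ℓ, ((r⁻¹ : ℝ) : ℂ) • m), ?_⟩, ?_⟩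
    · rw [formNormSq_smul, formNormSq_smul, Complex.normSq_ofReal, Complex.normSq_ofReal]
      field_simp
      rw [hr4]
      field_simp
    · rw [formMul_smul_smul, ← Complex.ofReal_mul, mul_inv_cancel₀ hr.ne', Complex.ofReal_one,
        one_smul]

lemma norm_sq_le_formNormSq_add (x : LinearForm × LinearForm) :
    ‖x‖ ^ 2 ≤ formNormSq x.1 + formNormSq x.2 := by
  have h₁ := sq_nonneg ‖x.1.1‖
  have h₂ := sq_nonneg ‖x.1.2‖
  have h₃ := sq_nonneg ‖x.2.1‖
  have h₄ := sq_nonneg ‖x.2.2‖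
  simp only [formNormSq, Complex.normSq_eq_norm_sq]
  refine (Real.le_sqrt (norm_nonneg x) (by positivity)).1 ?_
  simp only [norm_prod_le_iff]
  refine ⟨⟨?_, ?_⟩, ?_, ?_⟩ <;> exact Real.le_sqrt_of_sq_le (by linarith)

lemma formNormSq_mul_formNormSq_le (x : LinearForm × LinearForm) :
    formNormSq x.1 * formNormSq x.2 ≤ 5 * ‖formMul x‖ ^ 2 := by
  obtain ⟨⟨a, b⟩, ⟨c, d⟩⟩ := x
  set P := formMul ((a, b), (c, d))
  have hnorm : ‖a * c‖ ≤ ‖P‖ ∧ ‖a * d + b * c‖ ≤ ‖P‖ ∧ ‖b * d‖ ≤ ‖P‖ :=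
    ⟨norm_fst_le P, (norm_fst_le P.2).trans (norm_snd_le P),
      (norm_snd_le P.2).trans (norm_snd_le P)⟩
  have hexpand : formNormSq (a, b) * formNormSq (c, d) =
      2 * Complex.normSq (a * c) + Complex.normSq (a * d + b * c) + 2 * Complex.normSq (b * d) -
        Complex.normSq (a * conj c + b * conj d) := by
    simp only [formNormSq, Complex.normSq_apply, Complex.mul_re, Complex.mul_im, Complex.add_re,
      Complex.add_im, Complex.conj_re, Complex.conj_im]
    ring
  calc formNormSq (a, b) * formNormSq (c, d)
      ≤ 2 * ‖a * c‖ ^ 2 + ‖a * d + b * c‖ ^ 2 + 2 * ‖b * d‖ ^ 2 := by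
        simp only [← Complex.normSq_eq_norm_sq]
        linarith [Complex.normSq_nonneg (a * conj c + b * conj d)]
    _ ≤ 2 * ‖P‖ ^ 2 + ‖P‖ ^ 2 + 2 * ‖P‖ ^ 2 := by
        gcongr
        exacts [hnorm.1, hnorm.2.1, hnorm.2.2]
    _ = 5 * ‖P‖ ^ 2 := by ring

lemma norm_sq_le_norm_formMul (x : BalancedForms) : ‖x.1‖ ^ 2 ≤ 5 * ‖formMul x.1‖ := by
  have h₁ := norm_sq_le_formNormSq_add x.1
  have h₂ := formNormSq_mul_formNormSq_le x.1
  rw [x.2] at h₁ h₂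
  nlinarith [norm_nonneg (formMul x.1)]

lemma continuous_formMul : Continuous formMul := by
  unfold formMul
  fun_prop

lemma isClosed_balancedForms :
    IsClosed {x : LinearForm × LinearForm | formNormSq x.1 = formNormSq x.2} := by
  unfold formNormSq
  exact isClosed_eq (by fun_prop) (by fun_prop)

lemma isProperMap_formMul : IsProperMap fun x : BalancedForms ↦ formMul x.1 := by
  have hcont : Continuous fun x : BalancedForms ↦ formMul x.1 :=
    continuous_formMul.comp continuous_subtype_val
  refine isProperMap_iff_isCompact_preimage.2 ⟨hcont, fun K hK ↦ ?_⟩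
  obtain ⟨R, hR⟩ := hK.isBounded.exists_norm_le
  have hball : IsCompact (Subtype.val ⁻¹' Metric.closedBall 0 √(5 * R) : Set BalancedForms) :=
    isClosed_balancedForms.isClosedEmbedding_subtypeVal.isCompact_preimage
      (isCompact_closedBall _ _)
  refine hball.of_isClosed_subset (hK.isClosed.preimage hcont) fun x hx ↦ ?_
  rw [mem_preimage, mem_closedBall_zero_iff]
  exact Real.le_sqrt_of_sq_le ((norm_sq_le_norm_formMul x).trans (by gcongr; exact hR _ hx))

lemma isQuotientMap_formMul : IsQuotientMap fun x : BalancedForms ↦ formMul x.1 :=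
  isProperMap_formMul.isClosedMap.isQuotientMap isProperMap_formMul.continuous
    exists_balancedForms_formMul_eq

end BinaryForms

section PlanarQuaternions

/-- The real 3-space of planar quaternions `t + x i + y j`, written as pairs `(t, x + y I)`. -/
abbrev PlanarVec : Type := ℝ × ℂ

/-- The planar quaternion `t + x i + y j` of the pair `(t, x + y I)`. -/
def toQuaternion : PlanarVec →L[ℝ] Quaternion ℝ :=
  LinearMap.toContinuousLinearMap
    { toFun := fun v ↦ ⟨v.1, v.2.re, v.2.im, 0⟩
      map_add' := fun _ _ ↦ QuaternionAlgebra.ext rfl rfl rfl (add_zero 0).symm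
      map_smul' := fun t v ↦ QuaternionAlgebra.ext rfl (Complex.smul_re t v.2)
        (Complex.smul_im t v.2) (mul_zero t).symm }

@[simp] lemma toQuaternion_re (v : PlanarVec) : (toQuaternion v).re = v.1 := rfl
@[simp] lemma toQuaternion_imI (v : PlanarVec) : (toQuaternion v).imI = v.2.re := rfl
@[simp] lemma toQuaternion_imJ (v : PlanarVec) : (toQuaternion v).imJ = v.2.im := rfl
@[simp] lemma toQuaternion_imK (v : PlanarVec) : (toQuaternion v).imK = 0 := rfl

/-- The action of a linear isometry of the plane on planar quaternions, fixing the real axis. -/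
def planarIso (g : ℂ ≃ₗᵢ[ℝ] ℂ) : PlanarVec ≃L[ℝ] PlanarVec :=
  (ContinuousLinearEquiv.refl ℝ ℝ).prodCongr g.toContinuousLinearEquiv

@[simp] lemma planarIso_fst (g : ℂ ≃ₗᵢ[ℝ] ℂ) (v : PlanarVec) : (planarIso g v).1 = v.1 := rfl
@[simp] lemma planarIso_snd (g : ℂ ≃ₗᵢ[ℝ] ℂ) (v : PlanarVec) : (planarIso g v).2 = g v.2 := rfl

/-- The `k`-component of the product of four planar quaternions. -/
def relatorForm : ContinuousMultilinearMap ℝ (fun _ : Fin 4 ↦ PlanarVec) ℝ :=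
  (LinearMap.toContinuousLinearMap
    { toFun := fun q : Quaternion ℝ ↦ q.imK
      map_add' := fun _ _ ↦ rfl
      map_smul' := fun _ _ ↦ rfl }).compContinuousMultilinearMap
    ((ContinuousMultilinearMap.mkPiAlgebraFin ℝ 4 (Quaternion ℝ)).compContinuousLinearMap
      fun _ ↦ toQuaternion)

lemma relatorForm_apply (v : Fin 4 → PlanarVec) :
    relatorForm v = (toQuaternion (v 0) * toQuaternion (v 1) * toQuaternion (v 2) *
      toQuaternion (v 3)).imK := by
  have h : (List.ofFn fun i ↦ toQuaternion (v i)).prod =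
      toQuaternion (v 0) * toQuaternion (v 1) * toQuaternion (v 2) * toQuaternion (v 3) := by
    simp [List.ofFn_succ, mul_assoc]
  exact congrArg (fun q : Quaternion ℝ ↦ q.imK) h

lemma relatorForm_eq_zero_iff {v : Fin 4 → PlanarVec} : relatorForm v = 0 ↔
    toQuaternion (v 0) * toQuaternion (v 1) * toQuaternion (v 2) * toQuaternion (v 3) =
      toQuaternion (v 3) * toQuaternion (v 2) * toQuaternion (v 1) * toQuaternion (v 0) := by
  rw [relatorForm_apply]
  simp only [Quaternion.ext_iff, Quaternion.re_mul, Quaternion.imI_mul, Quaternion.imJ_mul,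
    Quaternion.imK_mul, toQuaternion_re, toQuaternion_imI, toQuaternion_imJ, toQuaternion_imK]
  constructor
  · intro h
    refine ⟨by ring, by ring, by ring, by linear_combination 2 * h⟩
  · rintro ⟨-, -, -, h⟩
    linear_combination h / 2

lemma relatorForm_conj (v : Fin 4 → PlanarVec) :
    relatorForm (fun i ↦ planarIso Complex.conjLIE (v i)) = -relatorForm v := by
  simp only [relatorForm_apply, Quaternion.imK_mul, Quaternion.re_mul, Quaternion.imI_mul,
    Quaternion.imJ_mul, toQuaternion_re, toQuaternion_imI, toQuaternion_imJ, toQuaternion_imK,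
    planarIso_fst, planarIso_snd, Complex.conjLIE_apply, Complex.conj_re, Complex.conj_im]
  ring

lemma toQuaternion_injective : Function.Injective toQuaternion := fun v w h ↦ by
  simp only [Quaternion.ext_iff, toQuaternion_re, toQuaternion_imI, toQuaternion_imJ] at h
  exact Prod.ext h.1 (Complex.ext h.2.1 h.2.2.1)

lemma toQuaternion_ne_zero {v : PlanarVec} (hv : v ≠ 0) : toQuaternion v ≠ 0 :=
  (map_ne_zero_iff _ toQuaternion_injective).2 hv

lemma exists_toQuaternion_eq {q : Quaternion ℝ} (hq : q.imK = 0) : ∃ v, toQuaternion v = q :=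
  ⟨(q.re, ⟨q.imI, q.imJ⟩), by ext <;> simp [hq]⟩

lemma exists_conj_eq_of_rotation (a : Circle) : ∃ u : Quaternion ℝ, u ≠ 0 ∧
    ∀ v, toQuaternion (planarIso (rotation a) v) = u * toQuaternion v * u⁻¹ := by
  obtain ⟨s, hs⟩ := IsAlgClosed.exists_pow_nat_eq (a : ℂ) two_pos
  have hre : (a : ℂ).re = s.re ^ 2 - s.im ^ 2 := by simp [← hs, pow_two]
  have him : (a : ℂ).im = 2 * s.re * s.im := by simp [← hs, pow_two]; ring
  have hnorm : s.re * s.re + s.im * s.im = 1 := by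
    rw [← Complex.normSq_apply, Complex.normSq_eq_norm_sq, ← norm_pow, hs, Circle.norm_coe]
  let u : Quaternion ℝ := ⟨s.re, 0, 0, s.im⟩
  have hu : u ≠ 0 := by
    intro h
    have h₀ : s.re = 0 := congrArg QuaternionAlgebra.re h
    have h₃ : s.im = 0 := congrArg QuaternionAlgebra.imK h
    simp [h₀, h₃] at hnorm
  have hcoord : u.re = s.re ∧ u.imI = 0 ∧ u.imJ = 0 ∧ u.imK = s.im := ⟨rfl, rfl, rfl, rfl⟩
  refine ⟨u, hu, fun v ↦ (eq_mul_inv_iff_mul_eq₀ hu).2 ?_⟩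
  ext <;> simp only [Quaternion.re_mul, Quaternion.imI_mul, Quaternion.imJ_mul,
    Quaternion.imK_mul, toQuaternion_re, toQuaternion_imI, toQuaternion_imJ, toQuaternion_imK,
    planarIso_fst, planarIso_snd, rotation_apply, Complex.mul_re, Complex.mul_im, hre, him, hcoord]
  · ring
  · linear_combination (s.re * v.2.re - s.im * v.2.im) * hnorm
  · linear_combination (s.im * v.2.re + s.re * v.2.im) * hnorm
  · ring

lemma exists_conj_eq_of_conj : ∃ u : Quaternion ℝ, u ≠ 0 ∧
    ∀ v, toQuaternion (planarIso Complex.conjLIE v) = u * toQuaternion v * u⁻¹ := by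
  have hi : toQuaternion (0, 1) ≠ 0 := toQuaternion_ne_zero (by simp)
  refine ⟨_, hi, fun v ↦ (eq_mul_inv_iff_mul_eq₀ hi).2 ?_⟩
  ext <;> simp

lemma exists_conj_eq_of_linearIsometry (g : ℂ ≃ₗᵢ[ℝ] ℂ) : ∃ u : Quaternion ℝ, u ≠ 0 ∧
    ∀ v, toQuaternion (planarIso g v) = u * toQuaternion v * u⁻¹ := by
  obtain ⟨a, rfl | rfl⟩ := linear_isometry_complex g
  · exact exists_conj_eq_of_rotation a
  · obtain ⟨u, hu, huv⟩ := exists_conj_eq_of_rotation a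
    obtain ⟨w, hw, hwv⟩ := exists_conj_eq_of_conj
    refine ⟨u * w, mul_ne_zero hu hw, fun v ↦ ?_⟩
    calc toQuaternion (planarIso (Complex.conjLIE.trans (rotation a)) v)
        = u * (w * toQuaternion v * w⁻¹) * u⁻¹ := by rw [← hwv, ← huv]; rfl
      _ = u * w * toQuaternion v * (u * w)⁻¹ := by simp only [mul_inv_rev, mul_assoc]

lemma exists_norm_eq_one_conj_eq {u : Quaternion ℝ} (hu : u ≠ 0) : ∃ u' : Quaternion ℝ,
    ‖u'‖ = 1 ∧ ∀ x, u' * x * u'⁻¹ = u * x * u⁻¹ := by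
  refine ⟨‖u‖⁻¹ • u, norm_smul_inv_norm hu, fun x ↦ ?_⟩
  simp only [smul_inv₀, inv_inv, smul_mul_assoc, mul_smul_comm, smul_smul,
    mul_inv_cancel₀ (norm_ne_zero_iff.2 hu), one_smul]

end PlanarQuaternions

section Planarity

lemma exists_dotProduct_eq_zero_of_span_ne_top {K ι : Type*} [Field K] [Fintype ι]
    {S : Submodule K (ι → K)} (hS : S ≠ ⊤) : ∃ w : ι → K, w ≠ 0 ∧ ∀ x ∈ S, w ⬝ᵥ x = 0 := by
  classical
  obtain ⟨f, hf, hSf⟩ := Submodule.exists_le_ker_of_lt_top S hS.lt_top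
  refine ⟨(dotProductEquiv K ι).symm f, by simpa using hf, fun x hx ↦ ?_⟩
  rw [← dotProductEquiv_apply_apply, LinearEquiv.apply_symm_apply]
  exact hSf hx

lemma exists_dotProduct_eq_zero_of_det_succAbove_eq_zero {K : Type*} [Field K] {n : ℕ}
    {v : Fin (n + 1) → Fin n → K}
    (h : ∀ m : Fin (n + 1), (Matrix.of fun i ↦ v (m.succAbove i)).det = 0) :
    ∃ w : Fin n → K, w ≠ 0 ∧ ∀ i, w ⬝ᵥ v i = 0 := by
  suffices hS : Submodule.span K (range v) ≠ ⊤ by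
    obtain ⟨w, hw, hwS⟩ := exists_dotProduct_eq_zero_of_span_ne_top hS
    exact ⟨w, hw, fun i ↦ hwS _ (Submodule.subset_span (mem_range_self i))⟩
  intro htop
  have hdep : ¬ LinearIndependent K v := fun hv ↦ by
    simpa using hv.fintype_card_le_finrank
  obtain ⟨m, hm⟩ : ∃ m, v m ∈ Submodule.span K (range fun i ↦ v (m.succAbove i)) := by
    simpa [linearIndependent_iff_notMem_span, ← compl_eq_univ_sdiff, ← Fin.range_succAbove,
      ← range_comp, Function.comp_def] using hdep
  have hspan : ⊤ ≤ Submodule.span K (range fun i ↦ v (m.succAbove i)) := by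
    rw [← htop, Submodule.span_le, range_subset_iff]
    intro i
    obtain rfl | ⟨j, rfl⟩ := m.eq_self_or_eq_succAbove i
    · exact hm
    · exact Submodule.subset_span (mem_range_self j)
  have hli := linearIndependent_of_top_le_span_of_card_eq_finrank hspan (by simp)
  have hunit : IsUnit (Matrix.of fun i ↦ v (m.succAbove i)) :=
    Matrix.linearIndependent_rows_iff_isUnit.1 hli
  exact ((Matrix.isUnit_iff_isUnit_det _).1 hunit).ne_zero (h m)

/-- The imaginary part of a quaternion as a vector in `ℝ³`. -/
def imVec (q : Quaternion ℝ) : Fin 3 → ℝ := ![q.imI, q.imJ, q.imK]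

lemma re_mul_mul_sub_re_mul_mul (a b c : Quaternion ℝ) :
    (a * b * c).re - (c * b * a).re = -2 * (Matrix.of ![imVec a, imVec b, imVec c]).det := by
  simp only [Matrix.det_fin_three, imVec, Matrix.of_apply, Matrix.cons_val, Quaternion.re_mul,
    Quaternion.imI_mul, Quaternion.imJ_mul, Quaternion.imK_mul]
  ring

lemma det_imVec_eq_zero_iff {a b c : Quaternion ℝ} :
    (Matrix.of ![imVec a, imVec b, imVec c]).det = 0 ↔ (a * b * c).re = (c * b * a).re := by
  rw [← sub_eq_zero (a := (a * b * c).re), re_mul_mul_sub_re_mul_mul]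
  simp

lemma quaternion_re_mul_comm (x y : Quaternion ℝ) : (x * y).re = (y * x).re := by
  simp only [Quaternion.re_mul]
  ring

lemma quaternion_re_conj {u : Quaternion ℝ} (hu : u ≠ 0) (x : Quaternion ℝ) :
    (u * x * u⁻¹).re = x.re := by
  rw [quaternion_re_mul_comm, inv_mul_cancel_left₀ hu]

lemma re_mul_mul_inv_eq_iff {a b c : Quaternion ℝ} (hc : c ≠ 0) :
    (a * b * c⁻¹).re = (c⁻¹ * b * a).re ↔ (a * b * c).re = (c * b * a).re := by
  have hstar : (a * b * star c).re - (star c * b * a).re =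
      -((a * b * c).re - (c * b * a).re) := by
    simp only [Quaternion.re_mul, Quaternion.imI_mul, Quaternion.imJ_mul, Quaternion.imK_mul,
      Quaternion.re_star, Quaternion.imI_star, Quaternion.imJ_star, Quaternion.imK_star]
    ring
  have hnorm : (Quaternion.normSq c)⁻¹ ≠ 0 := inv_ne_zero (Quaternion.normSq_ne_zero.2 hc)
  rw [Quaternion.inv_def, mul_smul_comm, smul_mul_assoc, smul_mul_assoc, Quaternion.re_smul,
    Quaternion.re_smul, smul_right_inj hnorm, ← sub_eq_zero, hstar, neg_eq_zero, sub_eq_zero]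

lemma det_imVec_succAbove_eq_zero {x : Fin 4 → Quaternion ℝ} (hx : ∀ i, x i ≠ 0)
    (h : x 0 * x 1 * x 2 * x 3 = x 3 * x 2 * x 1 * x 0) (m : Fin 4) :
    (Matrix.of fun i ↦ imVec (x (m.succAbove i))).det = 0 := by
  have hrow : (fun i ↦ imVec (x (m.succAbove i))) =
      ![imVec (x (m.succAbove 0)), imVec (x (m.succAbove 1)), imVec (x (m.succAbove 2))] :=
    List.ofFn_injective rfl
  rw [hrow, det_imVec_eq_zero_iff]
  fin_cases m
  · change (x 1 * x 2 * x 3).re = (x 3 * x 2 * x 1).re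
    have hconj : x 1 * x 2 * x 3 = (x 0)⁻¹ * (x 3 * x 2 * x 1) * (x 0)⁻¹⁻¹ := by
      rw [inv_inv, mul_assoc (x 0)⁻¹, ← h]
      simp only [mul_assoc, inv_mul_cancel_left₀ (hx 0)]
    rw [hconj, quaternion_re_conj (inv_ne_zero (hx 0))]
  · change (x 0 * x 2 * x 3).re = (x 3 * x 2 * x 0).re
    have hconj : (x 0)⁻¹ * x 3 * x 2 = x 1 * (x 2 * x 3 * (x 0)⁻¹) * (x 1)⁻¹ := by
      rw [eq_mul_inv_iff_mul_eq₀ (hx 1), ← mul_right_inj' (hx 0), ← mul_left_inj' (hx 0)]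
      simp only [mul_assoc, mul_inv_cancel_left₀ (hx 0), inv_mul_cancel₀ (hx 0), mul_one] at h ⊢
      exact h.symm
    rw [mul_assoc, quaternion_re_mul_comm, quaternion_re_mul_comm (x 3 * x 2), ← mul_assoc,
      ← re_mul_mul_inv_eq_iff (hx 0), hconj, quaternion_re_conj (hx 1)]
  · change (x 0 * x 1 * x 3).re = (x 3 * x 1 * x 0).re
    have hconj : (x 3)⁻¹ * (x 0 * x 1) = x 2 * (x 1 * x 0 * (x 3)⁻¹) * (x 2)⁻¹ := by
      rw [eq_mul_inv_iff_mul_eq₀ (hx 2), ← mul_right_inj' (hx 3), ← mul_left_inj' (hx 3)]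
      simp only [mul_assoc, mul_inv_cancel_left₀ (hx 3), inv_mul_cancel₀ (hx 3), mul_one] at h ⊢
      exact h
    rw [← re_mul_mul_inv_eq_iff (hx 3), quaternion_re_mul_comm, hconj,
      quaternion_re_conj (hx 2), quaternion_re_mul_comm, mul_assoc]
  · change (x 0 * x 1 * x 2).re = (x 2 * x 1 * x 0).re
    have hconj : x 0 * x 1 * x 2 = x 3 * (x 2 * x 1 * x 0) * (x 3)⁻¹ := by
      rw [eq_mul_inv_iff_mul_eq₀ (hx 3), h]
      simp only [mul_assoc]
    rw [hconj, quaternion_re_conj (hx 3)]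

lemma exists_conj_imK_eq_zero {n : Fin 3 → ℝ} (hn : n ≠ 0) : ∃ u : Quaternion ℝ, u ≠ 0 ∧
    ∀ x, n ⬝ᵥ imVec x = 0 → (u * x * u⁻¹).imK = 0 := by
  wlog hn₂ : 0 ≤ n 2 generalizing n
  · obtain ⟨u, hu, hux⟩ := this (neg_ne_zero.2 hn) (by simpa using (not_le.1 hn₂).le)
    exact ⟨u, hu, fun x hx ↦ hux x (by simpa using hx)⟩
  let r := √(n 0 * n 0 + n 1 * n 1 + n 2 * n 2)
  have hr : 0 ≤ r := Real.sqrt_nonneg _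
  have hrsq : r * r = n 0 * n 0 + n 1 * n 1 + n 2 * n 2 := Real.mul_self_sqrt <|
    add_nonneg (add_nonneg (mul_self_nonneg _) (mul_self_nonneg _)) (mul_self_nonneg _)
  -- Conjugation by `u` is the half-turn about the bisector of `n` and the `k`-axis.
  let u : Quaternion ℝ := ⟨0, n 0, n 1, n 2 + r⟩
  have hcoord : u.re = 0 ∧ u.imI = n 0 ∧ u.imJ = n 1 ∧ u.imK = n 2 + r := ⟨rfl, rfl, rfl, rfl⟩
  refine ⟨u, fun hu ↦ ?_, fun x hx ↦ ?_⟩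
  · have h₀ : n 0 = 0 := congrArg QuaternionAlgebra.imI hu
    have h₁ : n 1 = 0 := congrArg QuaternionAlgebra.imJ hu
    have h₂ : n 2 + r = 0 := congrArg QuaternionAlgebra.imK hu
    exact hn (funext (Fin.forall_fin_succ.2 ⟨h₀, Fin.forall_fin_two.2 ⟨h₁, by simp; linarith⟩⟩))
  · have himK : (u * x * star u).imK = 0 := by
      simp only [dotProduct, Fin.sum_univ_three, imVec, Matrix.cons_val] at hx
      simp only [Quaternion.re_mul, Quaternion.imI_mul, Quaternion.imJ_mul, Quaternion.imK_mul,
        Quaternion.re_star, Quaternion.imI_star, Quaternion.imJ_star, Quaternion.imK_star, hcoord]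
      linear_combination 2 * (n 2 + r) * hx + x.imK * hrsq
    rw [Quaternion.inv_def, mul_smul_comm, Quaternion.imK_smul, himK, smul_zero]

lemma exists_conj_toQuaternion_eq {x : Fin 4 → Quaternion ℝ} (hx : ∀ i, x i ≠ 0)
    (h : x 0 * x 1 * x 2 * x 3 = x 3 * x 2 * x 1 * x 0) : ∃ u : Quaternion ℝ, ‖u‖ = 1 ∧
      ∃ v : Fin 4 → PlanarVec, ∀ i, toQuaternion (v i) = u * x i * u⁻¹ := by
  obtain ⟨n, hn, hnx⟩ := exists_dotProduct_eq_zero_of_det_succAbove_eq_zero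
    (v := fun i ↦ imVec (x i)) (det_imVec_succAbove_eq_zero hx h)
  obtain ⟨w, hw, hwx⟩ := exists_conj_imK_eq_zero hn
  obtain ⟨u, hu, huw⟩ := exists_norm_eq_one_conj_eq hw
  choose v hv using fun i ↦ exists_toQuaternion_eq (hwx (x i) (hnx i))
  exact ⟨u, hu, v, fun i ↦ by rw [hv, huw]⟩

end Planarity

section CharacterVariety

/-- The substitution of variables `(R, S, P, Q) = (ab, a⁻¹, (ba)cd(ba)⁻¹, (bac)⁻¹)`, which turns
the genus two relation into the palindromic relation `abcd = dcba`. -/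
def palindromicSubst (G : Type*) [Group G] [TopologicalSpace G] [IsTopologicalGroup G] :
    (Fin 4 → G) ≃ₜ G × G × G × G where
  toFun x := (x 0 * x 1, (x 0)⁻¹, x 1 * x 0 * (x 2 * x 3) * (x 1 * x 0)⁻¹, (x 1 * x 0 * x 2)⁻¹)
  invFun t := ![t.2.1⁻¹, t.2.1 * t.1, (t.2.1 * t.1 * t.2.1⁻¹)⁻¹ * t.2.2.2⁻¹,
    t.2.2.2 * t.2.2.1 * (t.2.1 * t.1 * t.2.1⁻¹)]
  left_inv x := by
    ext i
    fin_cases i <;> simp [mul_assoc]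
  right_inv t := by simp [mul_assoc]
  continuous_toFun := by fun_prop
  continuous_invFun := by
    refine continuous_pi fun i ↦ ?_
    fin_cases i <;> simp only [Fin.zero_eta, Fin.mk_one, Fin.reduceFinMk, Matrix.cons_val] <;>
      fun_prop

/-- The product of commutators `[R, S][P, Q]`. -/
def genusTwoWord {G : Type*} [Group G] (t : G × G × G × G) : G :=
  t.1 * t.2.1 * t.1⁻¹ * t.2.1⁻¹ * (t.2.2.1 * t.2.2.2 * t.2.2.1⁻¹ * t.2.2.2⁻¹)

lemma genusTwoWord_palindromicSubst {G : Type*} [Group G] [TopologicalSpace G]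
    [IsTopologicalGroup G] (x : Fin 4 → G) : genusTwoWord (palindromicSubst G x) =
      x 0 * x 1 * x 2 * x 3 * (x 3 * x 2 * x 1 * x 0)⁻¹ := by
  simp [genusTwoWord, palindromicSubst, mul_assoc]

/-- The group `SU(2)`. -/
abbrev UnitQuaternion : Type := Metric.sphere (0 : Quaternion ℝ) 1

/-- Quadruples in `SU(2)` with `abcd = dcba`. -/
abbrev PalindromicSpace : Type :=
  {x : Fin 4 → UnitQuaternion // x 0 * x 1 * x 2 * x 3 = x 3 * x 2 * x 1 * x 0}

lemma genusTwoWord_eq_one_iff {t : UnitQuaternion × UnitQuaternion × UnitQuaternion ×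
    UnitQuaternion} : genusTwoWord t = 1 ↔ memX (t.1, t.2.1, t.2.2.1, t.2.2.2) := by
  simp [genusTwoWord, memX, Subtype.ext_iff]

/-- The representation space `X ⊂ ℍ⁴` as a subspace of `SU(2)⁴`. -/
def repSpaceHomeomorph :
    {t : UnitQuaternion × UnitQuaternion × UnitQuaternion × UnitQuaternion // genusTwoWord t = 1} ≃ₜ
      GenusTwoRepSpace where
  toFun t := ⟨(t.1.1, t.1.2.1, t.1.2.2.1, t.1.2.2.2), genusTwoWord_eq_one_iff.1 t.2⟩
  invFun s := ⟨(⟨s.1.1, by simpa using s.2.1⟩, ⟨s.1.2.1, by simpa using s.2.2.1⟩,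
    ⟨s.1.2.2.1, by simpa using s.2.2.2.1⟩, ⟨s.1.2.2.2, by simpa using s.2.2.2.2.1⟩),
    genusTwoWord_eq_one_iff.2 s.2⟩
  left_inv _ := rfl
  right_inv _ := rfl

/-- The change of variables between palindromic quadruples and representations. -/
def palindromicHomeomorph : PalindromicSpace ≃ₜ GenusTwoRepSpace :=
  ((palindromicSubst UnitQuaternion).subtype fun x ↦ by
    rw [genusTwoWord_palindromicSubst, mul_inv_eq_one]).trans repSpaceHomeomorph

lemma palindromicSubst_comp {G H : Type*} [Group G] [TopologicalSpace G] [IsTopologicalGroup G]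
    [Group H] [TopologicalSpace H] [IsTopologicalGroup H] (f : G →* H) (x : Fin 4 → G) :
    palindromicSubst H (f ∘ x) =
      Prod.map f (Prod.map f (Prod.map f f)) (palindromicSubst G x) := by
  simp [palindromicSubst]

lemma conjRel_palindromicHomeomorph {x y : PalindromicSpace} :
    conjRel (palindromicHomeomorph x) (palindromicHomeomorph y) ↔
      ∃ u : UnitQuaternion, ∀ i, y.1 i = u * x.1 i * u⁻¹ := by
  have hconj (u : UnitQuaternion) : (∀ i, y.1 i = u * x.1 i * u⁻¹) ↔
      palindromicSubst _ y.1 = Prod.map (MulAut.conj u) (Prod.map (MulAut.conj u)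
        (Prod.map (MulAut.conj u) (MulAut.conj u))) (palindromicSubst _ x.1) := by
    have h := palindromicSubst_comp (MulAut.conj u).toMonoidHom x.1
    rw [← (palindromicSubst UnitQuaternion).injective.eq_iff.trans funext_iff]
    exact (iff_of_eq (congrArg _ h))
  simp only [Prod.ext_iff, Subtype.ext_iff] at hconj
  constructor
  · rintro ⟨u, hu, h⟩
    have hu' : u ∈ Metric.sphere (0 : Quaternion ℝ) 1 := by simpa using hu
    exact ⟨⟨u, hu'⟩, fun i ↦ Subtype.ext ((hconj ⟨u, hu'⟩).2 h i)⟩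
  · rintro ⟨u, h⟩
    exact ⟨u, by simp, (hconj u).1 fun i ↦ congrArg Subtype.val (h i)⟩

/-- The real parts and inner products of a quadruple of quaternions. On palindromic quadruples
they separate conjugacy classes, although conjugation only realizes `SO(3)` and not `O(3)`. -/
def gramInvariants (x : Fin 4 → Quaternion ℝ) : (Fin 4 → ℝ) × (Fin 4 → Fin 4 → ℝ) :=
  (fun i ↦ (x i).re, fun i j ↦ inner ℝ (x i) (x j))

lemma gramInvariants_conj {u : Quaternion ℝ} (hu : ‖u‖ = 1) (x : Fin 4 → Quaternion ℝ) :
    gramInvariants (fun i ↦ u * x i * u⁻¹) = gramInvariants x := by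
  have hu₀ : u ≠ 0 := norm_ne_zero_iff.1 (by simp [hu])
  have hstar : star u = u⁻¹ := by
    rw [Quaternion.inv_def, Quaternion.normSq_eq_norm_mul_self, hu, mul_one, inv_one, one_smul]
  refine Prod.ext (funext fun i ↦ quaternion_re_conj hu₀ _) (funext₂ fun i j ↦ ?_)
  have hmul : u * x i * u⁻¹ * star (u * x j * u⁻¹) = u * (x i * star (x j)) * u⁻¹ := by
    rw [star_mul, star_mul, ← hstar, star_star, hstar]
    simp only [mul_assoc, inv_mul_cancel_left₀ hu₀]
  simp only [gramInvariants, Quaternion.inner_def, hmul, quaternion_re_conj hu₀]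

lemma inner_toQuaternion (v w : PlanarVec) :
    inner ℝ (toQuaternion v) (toQuaternion w) = v.1 * w.1 + inner ℝ v.2 w.2 := by
  simp only [Quaternion.inner_def, Quaternion.re_mul, Quaternion.re_star, Quaternion.imI_star,
    Quaternion.imJ_star, Quaternion.imK_star, toQuaternion_re, toQuaternion_imI, toQuaternion_imJ,
    toQuaternion_imK, Complex.inner, Complex.mul_re, Complex.conj_re, Complex.conj_im]
  ring

lemma exists_planarIso_of_gramInvariants_eq {v w : Fin 4 → PlanarVec}
    (h : gramInvariants (toQuaternion ∘ v) = gramInvariants (toQuaternion ∘ w)) :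
    ∃ g : ℂ ≃ₗᵢ[ℝ] ℂ, ∀ i, w i = planarIso g (v i) := by
  have hre (i : Fin 4) : (v i).1 = (w i).1 := congrFun (congrArg Prod.fst h) i
  have hinner (i j : Fin 4) : inner ℝ (v i).2 (v j).2 = inner ℝ (w i).2 (w j).2 := by
    have hij := congrFun₂ (congrArg Prod.snd h) i j
    simp only [gramInvariants, Function.comp_apply, inner_toQuaternion, hre] at hij
    linarith
  obtain ⟨g, hg⟩ := exists_linearIsometryEquiv_of_inner_eq hinner
  exact ⟨g, fun i ↦ Prod.ext (hre i).symm (hg i).symm⟩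

lemma gramInvariants_planarIso (g : ℂ ≃ₗᵢ[ℝ] ℂ) (v : Fin 4 → PlanarVec) :
    gramInvariants (fun i ↦ toQuaternion (planarIso g (v i))) =
      gramInvariants (toQuaternion ∘ v) := by
  obtain ⟨u, hu, huv⟩ := exists_conj_eq_of_linearIsometry g
  obtain ⟨u', hu', hconj⟩ := exists_norm_eq_one_conj_eq hu
  simp only [huv, ← hconj]
  exact gramInvariants_conj hu' _

lemma exists_conj_eq_of_gramInvariants_eq {x y : PalindromicSpace}
    (h : gramInvariants (fun i ↦ x.1 i) = gramInvariants (fun i ↦ y.1 i)) :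
    ∃ u : UnitQuaternion, ∀ i, y.1 i = u * x.1 i * u⁻¹ := by
  have hplanar (z : PalindromicSpace) := exists_conj_toQuaternion_eq (x := fun i ↦ z.1 i)
    (fun i ↦ ne_zero_of_mem_unit_sphere (z.1 i)) (congrArg Subtype.val z.2)
  obtain ⟨a, ha, v, hv⟩ := hplanar x
  obtain ⟨b, hb, w, hw⟩ := hplanar y
  obtain ⟨g, hg⟩ := exists_planarIso_of_gramInvariants_eq (v := v) (w := w) <| by
    simp only [Function.comp_def, hv, hw, gramInvariants_conj ha, gramInvariants_conj hb, h]
  obtain ⟨u, hu, huv⟩ := exists_conj_eq_of_linearIsometry g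
  have hne {c : Quaternion ℝ} (hc : ‖c‖ = 1) : c ≠ 0 := norm_ne_zero_iff.1 (by simp [hc])
  obtain ⟨c, hc, hconj⟩ := exists_norm_eq_one_conj_eq
    (mul_ne_zero (mul_ne_zero (inv_ne_zero (hne hb)) hu) (hne ha))
  have hc' : c ∈ Metric.sphere (0 : Quaternion ℝ) 1 := by simpa using hc
  refine ⟨⟨c, hc'⟩, fun i ↦ Subtype.ext ?_⟩
  have hi : b * y.1 i * b⁻¹ = u * (a * x.1 i * a⁻¹) * u⁻¹ := by rw [← hv, ← hw, hg, huv]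
  calc (y.1 i : Quaternion ℝ) = b⁻¹ * (b * y.1 i * b⁻¹) * b := by
        simp [mul_assoc, hne hb]
    _ = c * x.1 i * c⁻¹ := by
        rw [hi, hconj]
        simp [mul_assoc, mul_inv_rev]

/-- The class in `χ(F₂)` of a palindromic quadruple. -/
def palindromicClass (x : PalindromicSpace) : ChiF2 := Quot.mk _ (palindromicHomeomorph x)

/-- The Gram invariants as functions on `χ(F₂)`. -/
def chiInvariants : ChiF2 → (Fin 4 → ℝ) × (Fin 4 → Fin 4 → ℝ) :=
  Quot.lift (fun s ↦ gramInvariants fun i ↦ (palindromicHomeomorph.symm s).1 i) fun s t h ↦ by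
    rw [← palindromicHomeomorph.apply_symm_apply s, ← palindromicHomeomorph.apply_symm_apply t,
      conjRel_palindromicHomeomorph] at h
    obtain ⟨u, hu⟩ := h
    simp only [hu]
    exact (gramInvariants_conj (by simp) _).symm

lemma isQuotientMap_palindromicClass : IsQuotientMap palindromicClass :=
  isQuotientMap_quot_mk.comp palindromicHomeomorph.isQuotientMap

lemma chiInvariants_palindromicClass (x : PalindromicSpace) :
    chiInvariants (palindromicClass x) = gramInvariants fun i ↦ x.1 i := by
  simp [chiInvariants, palindromicClass]

lemma continuous_chiInvariants : Continuous chiInvariants := by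
  rw [isQuotientMap_palindromicClass.continuous_iff]
  simp only [Function.comp_def, chiInvariants_palindromicClass, gramInvariants]
  have hx (i : Fin 4) : Continuous fun x : PalindromicSpace ↦ (x.1 i : Quaternion ℝ) :=
    continuous_subtype_val.comp ((continuous_apply i).comp continuous_subtype_val)
  exact (continuous_pi fun i ↦ Quaternion.continuous_re.comp (hx i)).prodMk
    (continuous_pi fun i ↦ continuous_pi fun j ↦ (hx i).inner (hx j))

lemma injective_chiInvariants : Function.Injective chiInvariants := fun p q h ↦ by
  obtain ⟨x, rfl⟩ := isQuotientMap_palindromicClass.surjective p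
  obtain ⟨y, rfl⟩ := isQuotientMap_palindromicClass.surjective q
  rw [chiInvariants_palindromicClass, chiInvariants_palindromicClass] at h
  exact Quot.sound (conjRel_palindromicHomeomorph.2 (exists_conj_eq_of_gramInvariants_eq h))

instance : T2Space ChiF2 :=
  .of_injective_continuous injective_chiInvariants continuous_chiInvariants

instance : CompactSpace PalindromicSpace :=
  isCompact_iff_compactSpace.1 (isClosed_eq (by fun_prop) (by fun_prop)).isCompact

instance : CompactSpace ChiF2 :=
  ⟨isQuotientMap_palindromicClass.surjective.range_eq ▸
    isCompact_range isQuotientMap_palindromicClass.continuous⟩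

end CharacterVariety

section Configurations

/-- Quadruples of nonzero planar vectors in the zero set of `F`. -/
abbrev Config (F : ContinuousMultilinearMap ℝ (fun _ : Fin 4 ↦ PlanarVec) ℝ) : Type :=
  {v : Fin 4 → PlanarVec // (∀ i, v i ≠ 0) ∧ F v = 0}

lemma continuous_config_apply {F : ContinuousMultilinearMap ℝ (fun _ : Fin 4 ↦ PlanarVec) ℝ}
    (i : Fin 4) : Continuous fun v : Config F ↦ v.1 i :=
  (continuous_apply i).comp continuous_subtype_val

/-- Two quadruples agree up to an isometry of the plane and positive rescaling of each entry. -/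
def SameShape (v w : Fin 4 → PlanarVec) : Prop :=
  ∃ (g : ℂ ≃ₗᵢ[ℝ] ℂ) (t : Fin 4 → ℝ), (∀ i, 0 < t i) ∧ ∀ i, w i = t i • planarIso g (v i)

/-- `ψ` presents (an open part of) `χ` as the space of configurations in the zero set of `F` up to
shape, where this zero set is invariant under `O(2)` and `F` is odd under conjugation. The form is
not fixed to be `relatorForm` because permuting the slots changes it. -/
structure IsModel {χ : Type*} [TopologicalSpace χ]
    (F : ContinuousMultilinearMap ℝ (fun _ : Fin 4 ↦ PlanarVec) ℝ) (ψ : Config F → χ) : Prop where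
  continuous : Continuous ψ
  isOpenMap : IsOpenMap ψ
  eq_iff : ∀ {v w}, ψ v = ψ w ↔ SameShape v.1 w.1
  map_planarIso : ∀ {v} (g : ℂ ≃ₗᵢ[ℝ] ℂ), F v = 0 → F (fun i ↦ planarIso g (v i)) = 0
  map_conj : ∀ v, F (fun i ↦ planarIso Complex.conjLIE (v i)) = -F v

lemma relatorForm_planarIso {v : Fin 4 → PlanarVec} (g : ℂ ≃ₗᵢ[ℝ] ℂ) (hv : relatorForm v = 0) :
    relatorForm (fun i ↦ planarIso g (v i)) = 0 := by
  obtain ⟨u, hu, huv⟩ := exists_conj_eq_of_linearIsometry g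
  rw [relatorForm_eq_zero_iff] at hv ⊢
  simp only [huv, mul_assoc, inv_mul_cancel_left₀ hu] at hv ⊢
  simpa only [mul_assoc] using congrArg (u * · * u⁻¹) hv

lemma relatorForm_smul {v : Fin 4 → PlanarVec} (c : Fin 4 → ℝ) (hv : relatorForm v = 0) :
    relatorForm (fun i ↦ c i • v i) = 0 :=
  (relatorForm.map_smul_univ c v).trans (by rw [hv, smul_zero])

/-- The positive multiple of `v` of quaternion norm one. -/
def unitVec (v : PlanarVec) : PlanarVec := ‖toQuaternion v‖⁻¹ • v

lemma norm_toQuaternion_unitVec {v : PlanarVec} (hv : v ≠ 0) : ‖toQuaternion (unitVec v)‖ = 1 := by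
  rw [unitVec, map_smul]
  exact norm_smul_inv_norm (toQuaternion_ne_zero hv)

lemma relatorForm_unitVec {v : Fin 4 → PlanarVec} (hv : relatorForm v = 0) :
    relatorForm (fun i ↦ unitVec (v i)) = 0 :=
  relatorForm_smul _ hv

/-- A quadruple of quaternions of norm one as a point of the palindromic space. -/
def toPalindromic (x : Fin 4 → Quaternion ℝ) (hx : ∀ i, ‖x i‖ = 1)
    (h : x 0 * x 1 * x 2 * x 3 = x 3 * x 2 * x 1 * x 0) : PalindromicSpace :=
  ⟨fun i ↦ ⟨x i, mem_sphere_zero_iff_norm.2 (hx i)⟩, Subtype.ext h⟩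

/-- The class in `χ(F₂)` of the unit quaternions obtained by normalizing a configuration. -/
def configClass (v : Config relatorForm) : ChiF2 :=
  palindromicClass (toPalindromic (fun i ↦ toQuaternion (unitVec (v.1 i)))
    (fun i ↦ norm_toQuaternion_unitVec (v.2.1 i))
    (relatorForm_eq_zero_iff (v := fun i ↦ unitVec (v.1 i)).1 (relatorForm_unitVec v.2.2)))

lemma chiInvariants_configClass (v : Config relatorForm) :
    chiInvariants (configClass v) = gramInvariants (toQuaternion ∘ fun i ↦ unitVec (v.1 i)) :=
  chiInvariants_palindromicClass _

lemma unitVec_eq_self {v : PlanarVec} (hv : ‖toQuaternion v‖ = 1) : unitVec v = v := by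
  rw [unitVec, hv, inv_one, one_smul]

lemma unitVec_planarIso (g : ℂ ≃ₗᵢ[ℝ] ℂ) (v : PlanarVec) :
    unitVec (planarIso g v) = planarIso g (unitVec v) := by
  have hnorm : ‖toQuaternion (planarIso g v)‖ = ‖toQuaternion v‖ := by
    rw [norm_eq_sqrt_real_inner, inner_toQuaternion, norm_eq_sqrt_real_inner, inner_toQuaternion]
    simp
  rw [unitVec, hnorm, unitVec, map_smul]

lemma unitVec_smul {t : ℝ} (ht : 0 < t) (v : PlanarVec) : unitVec (t • v) = unitVec v := by
  rw [unitVec, map_smul, norm_smul, Real.norm_of_nonneg ht.le, smul_smul, mul_inv, mul_comm,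
    ← mul_assoc, mul_inv_cancel₀ ht.ne', one_mul, unitVec]

lemma norm_smul_unitVec {v : PlanarVec} (hv : v ≠ 0) : ‖toQuaternion v‖ • unitVec v = v :=
  smul_inv_smul₀ (norm_ne_zero_iff.2 (toQuaternion_ne_zero hv)) v

lemma configClass_eq_iff {v w : Config relatorForm} :
    configClass v = configClass w ↔ SameShape v.1 w.1 := by
  rw [← injective_chiInvariants.eq_iff, chiInvariants_configClass, chiInvariants_configClass]
  constructor
  · intro h
    obtain ⟨g, hg⟩ := exists_planarIso_of_gramInvariants_eq h
    have hpos {u : Config relatorForm} (i : Fin 4) : 0 < ‖toQuaternion (u.1 i)‖ :=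
      norm_pos_iff.2 (toQuaternion_ne_zero (u.2.1 i))
    refine ⟨g, fun i ↦ ‖toQuaternion (w.1 i)‖ * ‖toQuaternion (v.1 i)‖⁻¹,
      fun i ↦ mul_pos (hpos i) (inv_pos.2 (hpos i)), fun i ↦ ?_⟩
    rw [mul_smul, ← map_smul, ← unitVec, ← hg, norm_smul_unitVec (w.2.1 i)]
  · rintro ⟨g, t, ht, hw⟩
    simp only [Function.comp_def, hw, unitVec_smul (ht _), unitVec_planarIso]
    exact (gramInvariants_planarIso g _).symm

lemma continuous_configClass : Continuous configClass := by
  refine isQuotientMap_palindromicClass.continuous.comp (.subtype_mk (continuous_pi fun i ↦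
    .subtype_mk ?_ _) _)
  have hv : Continuous fun v : Config relatorForm ↦ v.1 i := continuous_config_apply i
  exact toQuaternion.continuous.comp <| ((toQuaternion.continuous.comp hv).norm.inv₀ fun v ↦
    norm_ne_zero_iff.2 (toQuaternion_ne_zero (v.2.1 i))).smul hv

lemma exists_configClass_eq (p : ChiF2) :
    ∃ v : Config relatorForm, (∀ i, ‖toQuaternion (v.1 i)‖ = 1) ∧ configClass v = p := by
  obtain ⟨x, rfl⟩ := isQuotientMap_palindromicClass.surjective p
  have hx (i : Fin 4) : (x.1 i : Quaternion ℝ) ≠ 0 := ne_zero_of_mem_unit_sphere (x.1 i)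
  have hrel := congrArg Subtype.val x.2
  obtain ⟨u, hu, v, hv⟩ := exists_conj_toQuaternion_eq (x := fun i ↦ x.1 i) hx hrel
  have hu₀ : u ≠ 0 := norm_ne_zero_iff.1 (by simp [hu])
  have hnorm (i : Fin 4) : ‖toQuaternion (v i)‖ = 1 := by simp [hv, hu]
  have hv₀ (i : Fin 4) : v i ≠ 0 := fun h ↦ by simpa [h] using hnorm i
  have hF : relatorForm v = 0 := by
    rw [relatorForm_eq_zero_iff]
    simp only [hv, mul_assoc, inv_mul_cancel_left₀ hu₀]
    simpa [mul_assoc, hu₀] using congrArg (u * · * u⁻¹) hrel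
  refine ⟨⟨v, hv₀, hF⟩, hnorm, injective_chiInvariants ?_⟩
  rw [chiInvariants_configClass, chiInvariants_palindromicClass]
  simp only [Function.comp_def, unitVec_eq_self (hnorm _), hv, gramInvariants_conj hu]

lemma isCompact_unitConfigs :
    IsCompact {v : Config relatorForm | ∀ i, ‖toQuaternion (v.1 i)‖ = 1} := by
  have hinj : IsClosedEmbedding toQuaternion :=
    LinearMap.isClosedEmbedding_of_injective (LinearMap.ker_eq_bot.2 toQuaternion_injective)
  have himage : (Subtype.val '' {v : Config relatorForm | ∀ i, ‖toQuaternion (v.1 i)‖ = 1}) =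
      (univ.pi fun _ ↦ toQuaternion ⁻¹' Metric.sphere 0 1) ∩ {v | relatorForm v = 0} := by
    ext v
    simp only [mem_image, mem_ofPred_eq, Subtype.exists, exists_and_right, exists_eq_right,
      mem_inter_iff, mem_univ_pi, mem_preimage, mem_sphere_zero_iff_norm]
    constructor
    · rintro ⟨hv, hnorm⟩
      exact ⟨hnorm, hv.2⟩
    · rintro ⟨hnorm, hF⟩
      exact ⟨⟨fun i h ↦ by simpa [h] using hnorm i, hF⟩, hnorm⟩
  rw [IsEmbedding.subtypeVal.isCompact_iff, himage]
  exact (isCompact_univ_pi fun _ ↦ hinj.isCompact_preimage (isCompact_sphere _ _)).inter_right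
    (isClosed_eq relatorForm.cont continuous_const)

lemma isQuotientMap_configClass : IsQuotientMap configClass := by
  let K := {v : Config relatorForm | ∀ i, ‖toQuaternion (v.1 i)‖ = 1}
  have : CompactSpace K := isCompact_iff_compactSpace.1 isCompact_unitConfigs
  have hcont : Continuous fun v : K ↦ configClass v :=
    continuous_configClass.comp continuous_subtype_val
  have hsurj : Function.Surjective fun v : K ↦ configClass v := fun p ↦ by
    obtain ⟨v, hv, hvp⟩ := exists_configClass_eq p
    exact ⟨⟨v, hv⟩, hvp⟩
  exact .of_comp continuous_subtype_val continuous_configClass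
    (hcont.isClosedMap.isQuotientMap hcont hsurj)

/-- Moving a configuration within its shape. -/
def reshape (g : ℂ ≃ₗᵢ[ℝ] ℂ) {t : Fin 4 → ℝ} (ht : ∀ i, 0 < t i) (v : Config relatorForm) :
    Config relatorForm :=
  ⟨fun i ↦ t i • planarIso g (v.1 i),
    fun i ↦ smul_ne_zero (ht i).ne' ((map_ne_zero_iff _ (planarIso g).injective).2 (v.2.1 i)),
    relatorForm_smul t (relatorForm_planarIso g v.2.2)⟩

lemma isOpenMap_configClass : IsOpenMap configClass := by
  intro U hU
  rw [← isQuotientMap_configClass.isOpen_preimage]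
  have hpre : configClass ⁻¹' (configClass '' U) =
      ⋃ (g : ℂ ≃ₗᵢ[ℝ] ℂ) (t : Fin 4 → ℝ) (ht : ∀ i, 0 < t i), reshape g ht ⁻¹' U := by
    ext v
    simp only [mem_preimage, mem_image, mem_iUnion]
    constructor
    · rintro ⟨w, hw, hwv⟩
      obtain ⟨g, t, ht, h⟩ := configClass_eq_iff.1 hwv.symm
      exact ⟨g, t, ht, by rwa [show reshape g ht v = w from Subtype.ext (funext h).symm]⟩
    · rintro ⟨g, t, ht, h⟩
      exact ⟨_, h, (configClass_eq_iff.2 ⟨g, t, ht, fun i ↦ rfl⟩).symm⟩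
  rw [hpre]
  refine isOpen_iUnion fun g ↦ isOpen_iUnion fun t ↦ isOpen_iUnion fun ht ↦ hU.preimage ?_
  exact .subtype_mk (continuous_pi fun i ↦ ((planarIso g).continuous.comp
    (continuous_config_apply i)).const_smul (t i)) _

lemma isModel_configClass : IsModel relatorForm configClass where
  continuous := continuous_configClass
  isOpenMap := isOpenMap_configClass
  eq_iff := configClass_eq_iff
  map_planarIso := relatorForm_planarIso
  map_conj := relatorForm_conj

end Configurations

section CentralPoints

/-- The planar part of a product of planar quaternions. -/
def planarMul (a b : PlanarVec) : PlanarVec :=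
  (a.1 * b.1 - inner ℝ a.2 b.2, a.1 • b.2 + b.1 • a.2)

/-- The oriented area of the parallelogram spanned by two vectors of the plane. -/
def cross (x y : ℂ) : ℝ := x.re * y.im - x.im * y.re

lemma cross_smul_smul (s t : ℝ) (x y : ℂ) : cross (s • x) (t • y) = s * t * cross x y := by
  simp only [cross, Complex.smul_re, Complex.smul_im, smul_eq_mul]
  ring

lemma cross_planarMul (a b : PlanarVec) : cross a.2 (planarMul a b).2 = a.1 * cross a.2 b.2 := by
  simp only [cross, planarMul, Complex.add_re, Complex.add_im, Complex.smul_re, Complex.smul_im,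
    smul_eq_mul]
  ring

lemma relatorForm_eq_cross (v : Fin 4 → PlanarVec) : relatorForm v =
    (planarMul (v 0) (v 1)).1 * cross (v 2).2 (v 3).2 +
      (planarMul (v 2) (v 3)).1 * cross (v 0).2 (v 1).2 +
      cross (planarMul (v 0) (v 1)).2 (planarMul (v 2) (v 3)).2 := by
  simp only [relatorForm_apply, planarMul, cross, Complex.inner, Quaternion.imK_mul,
    Quaternion.re_mul, Quaternion.imI_mul, Quaternion.imJ_mul, toQuaternion_re, toQuaternion_imI,
    toQuaternion_imJ, toQuaternion_imK, Complex.mul_re, Complex.conj_re, Complex.conj_im,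
    Complex.add_re, Complex.add_im, Complex.smul_re, Complex.smul_im, smul_eq_mul]
  ring

lemma planarMul_planarIso (g : ℂ ≃ₗᵢ[ℝ] ℂ) (a b : PlanarVec) :
    planarMul (planarIso g a) (planarIso g b) = planarIso g (planarMul a b) := by
  ext1
  · simp [planarMul]
  · simp only [planarMul, planarIso_fst, planarIso_snd, map_add, map_smul]

lemma planarMul_smul_smul (s t : ℝ) (a b : PlanarVec) :
    planarMul (s • a) (t • b) = (s * t) • planarMul a b := by
  ext1
  · simp only [planarMul, Prod.smul_fst, Prod.smul_snd, smul_eq_mul, inner_smul_left,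
      inner_smul_right, conj_trivial]
    ring
  · simp only [planarMul, Prod.smul_fst, Prod.smul_snd, smul_eq_mul]
    module

lemma eq_of_planarMul_eq {a b c : PlanarVec} (ha : a.1 ≠ 0) (h : planarMul a b = planarMul a c) :
    b = c := by
  obtain ⟨h₁, h₂⟩ := Prod.ext_iff.1 h
  have hinner := congrArg (inner ℝ a.2) h₂
  simp only [planarMul, inner_add_right, inner_smul_right, real_inner_self_eq_norm_sq]
    at h₁ h₂ hinner
  have hpos : a.1 ^ 2 + ‖a.2‖ ^ 2 ≠ 0 := by positivity
  have hfst : b.1 = c.1 := mul_left_cancel₀ hpos (by linear_combination a.1 * h₁ + hinner)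
  rw [hfst, add_left_inj] at h₂
  exact Prod.ext hfst (smul_right_injective ℂ ha h₂)

/-- The slope `x / t` of a planar vector `(t, x)`. -/
def planarSlope (a : PlanarVec) : ℂ := a.1⁻¹ • a.2

/-- The second entry of a pair `((1, p), b)` whose product has slope `q`. -/
def slopePartner (p q : ℂ) : PlanarVec :=
  (1 + inner ℝ p q, (1 + ‖p‖ ^ 2) • q - (1 + inner ℝ p q) • p)

lemma planarMul_slopePartner (p q : ℂ) :
    planarMul (1, p) (slopePartner p q) = (1 + ‖p‖ ^ 2) • (1, q) := by
  ext1
  · simp only [planarMul, slopePartner, inner_sub_right, inner_smul_right,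
      real_inner_self_eq_norm_sq, Prod.smul_fst, smul_eq_mul]
    ring
  · simp only [planarMul, slopePartner, Prod.smul_snd]
    module

lemma fst_smul_planarSlope {a : PlanarVec} (ha : a.1 ≠ 0) : a.1 • (1, planarSlope a) = a :=
  Prod.ext (mul_one _) (smul_inv_smul₀ ha _)

lemma planarSlope_planarIso (g : ℂ ≃ₗᵢ[ℝ] ℂ) (a : PlanarVec) :
    planarSlope (planarIso g a) = g (planarSlope a) :=
  (map_smul g _ _).symm

lemma planarSlope_smul {t : ℝ} (ht : t ≠ 0) (a : PlanarVec) :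
    planarSlope (t • a) = planarSlope a := by
  simp only [planarSlope, Prod.smul_fst, Prod.smul_snd, smul_eq_mul, smul_smul, mul_inv]
  rw [mul_right_comm, inv_mul_cancel₀ ht, one_mul]

lemma exists_smul_slopePartner_eq {a b : PlanarVec} (ha : 0 < a.1) (hab : 0 < (planarMul a b).1) :
    ∃ t : ℝ, 0 < t ∧
      b = t • slopePartner (planarSlope a) (planarSlope (planarMul a b)) := by
  set p := planarSlope a
  refine ⟨(planarMul a b).1 / (a.1 * (1 + ‖p‖ ^ 2)), by positivity, eq_of_planarMul_eq ha.ne' ?_⟩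
  nth_rw 2 [← fst_smul_planarSlope ha.ne']
  rw [planarMul_smul_smul, planarMul_slopePartner, smul_smul, mul_div_assoc', div_mul_eq_mul_div]
  rw [show a.1 * (planarMul a b).1 * (1 + ‖p‖ ^ 2) / (a.1 * (1 + ‖p‖ ^ 2)) = (planarMul a b).1 by
    field_simp, fst_smul_planarSlope hab.ne']

lemma planarIso_slopePartner (g : ℂ ≃ₗᵢ[ℝ] ℂ) (p q : ℂ) :
    planarIso g (slopePartner p q) = slopePartner (g p) (g q) := by
  ext1
  · simp [slopePartner]
  · simp only [slopePartner, planarIso_snd, map_sub, map_smul, LinearIsometryEquiv.inner_map_map,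
      LinearIsometryEquiv.norm_map]

/-- The slopes `p₁, q₁, p₂, q₂` of `v₀`, `v₀v₁`, `v₂`, `v₂v₃`. -/
def slopes (v : Fin 4 → PlanarVec) : Fin 4 → ℂ :=
  ![planarSlope (v 0), planarSlope (planarMul (v 0) (v 1)),
    planarSlope (v 2), planarSlope (planarMul (v 2) (v 3))]

/-- The quadruple with given slopes, normalized by `v₀.1 = v₂.1 = 1`. -/
def ofSlopes (z : Fin 4 → ℂ) : Fin 4 → PlanarVec :=
  ![(1, z 0), slopePartner (z 0) (z 1), (1, z 2), slopePartner (z 2) (z 3)]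

/-- The relation `relatorForm = 0` in terms of slopes. -/
def crossSum (z : Fin 4 → ℂ) : ℝ :=
  cross (z 0) (z 1) + cross (z 2) (z 3) + cross (z 1) (z 3)

/-- Configurations near central ones, where all slopes are defined. -/
def NearCentral (v : Fin 4 → PlanarVec) : Prop :=
  (0 < (v 0).1 ∧ 0 < (planarMul (v 0) (v 1)).1) ∧ 0 < (v 2).1 ∧ 0 < (planarMul (v 2) (v 3)).1

lemma relatorForm_eq_crossSum {v : Fin 4 → PlanarVec} (hv : NearCentral v) : relatorForm v =
    (planarMul (v 0) (v 1)).1 * (planarMul (v 2) (v 3)).1 * crossSum (slopes v) := by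
  have hcross {a b : PlanarVec} (ha : 0 < a.1) (hab : 0 < (planarMul a b).1) :
      cross a.2 b.2 = (planarMul a b).1 * cross (planarSlope a) (planarSlope (planarMul a b)) := by
    rw [planarSlope, planarSlope, cross_smul_smul, cross_planarMul]
    field_simp
  have hsnd {a : PlanarVec} (ha : 0 < a.1) : a.2 = a.1 • planarSlope a :=
    (smul_inv_smul₀ ha.ne' _).symm
  obtain ⟨⟨h₀, h₀₁⟩, h₂, h₂₃⟩ := hv
  rw [relatorForm_eq_cross, hcross h₀ h₀₁, hcross h₂ h₂₃, hsnd h₀₁, hsnd h₂₃, cross_smul_smul]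
  simp only [crossSum, slopes, Matrix.cons_val]
  ring

lemma slopes_ofSlopes (z : Fin 4 → ℂ) : slopes (ofSlopes z) = z := by
  have hone (p : ℂ) : planarSlope (1, p) = p := by simp [planarSlope]
  have hpair (p q : ℂ) : planarSlope (planarMul (1, p) (slopePartner p q)) = q := by
    rw [planarMul_slopePartner, planarSlope_smul (by positivity), hone]
  ext i
  fin_cases i <;> simp [slopes, ofSlopes, hpair, hone]

lemma nearCentral_ofSlopes (z : Fin 4 → ℂ) : NearCentral (ofSlopes z) := by
  have hpos (p q : ℂ) : 0 < (planarMul (1, p) (slopePartner p q)).1 := by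
    rw [planarMul_slopePartner]
    simp only [Prod.smul_fst, smul_eq_mul]
    positivity
  simp [NearCentral, ofSlopes, hpos]

lemma slopes_of_sameShape {v w : Fin 4 → PlanarVec} {g : ℂ ≃ₗᵢ[ℝ] ℂ} {t : Fin 4 → ℝ}
    (ht : ∀ i, 0 < t i) (h : ∀ i, w i = t i • planarIso g (v i)) :
    slopes w = g ∘ slopes v := by
  have hmul (i j : Fin 4) : t i * t j ≠ 0 := (mul_pos (ht i) (ht j)).ne'
  ext i
  fin_cases i <;>
    simp [slopes, h, planarMul_smul_smul, planarSlope_smul (hmul _ _), planarSlope_smul (ht _).ne',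
      planarMul_planarIso, planarSlope_planarIso]

lemma ofSlopes_comp (g : ℂ ≃ₗᵢ[ℝ] ℂ) (z : Fin 4 → ℂ) (i : Fin 4) :
    ofSlopes (g ∘ z) i = planarIso g (ofSlopes z i) := by
  fin_cases i <;> simp [ofSlopes, planarIso_slopePartner] <;> rfl

lemma sameShape_ofSlopes_iff {z z' : Fin 4 → ℂ} :
    SameShape (ofSlopes z) (ofSlopes z') ↔ ∃ g : ℂ ≃ₗᵢ[ℝ] ℂ, z' = g ∘ z := by
  constructor
  · rintro ⟨g, t, ht, h⟩
    exact ⟨g, by simpa only [slopes_ofSlopes] using slopes_of_sameShape ht h⟩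
  · rintro ⟨g, rfl⟩
    exact ⟨g, 1, fun _ ↦ one_pos, fun i ↦ by rw [ofSlopes_comp, Pi.one_apply, one_smul]⟩

lemma sameShape_ofSlopes_slopes {v : Fin 4 → PlanarVec} (hv : NearCentral v) :
    SameShape (ofSlopes (slopes v)) v := by
  obtain ⟨⟨h₀, h₀₁⟩, h₂, h₂₃⟩ := hv
  obtain ⟨t₁, ht₁, h₁⟩ := exists_smul_slopePartner_eq h₀ h₀₁
  obtain ⟨t₃, ht₃, h₃⟩ := exists_smul_slopePartner_eq h₂ h₂₃
  refine ⟨.refl ℝ ℂ, ![(v 0).1, t₁, (v 2).1, t₃], ?_, ?_⟩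
  · simp [Fin.forall_fin_succ, *]
  · have hone {a : PlanarVec} (ha : 0 < a.1) :
        a = a.1 • planarIso (.refl ℝ ℂ) (1, planarSlope a) :=
      (fst_smul_planarSlope ha.ne').symm
    exact Fin.forall_fin_succ.2 ⟨hone h₀, Fin.forall_fin_succ.2 ⟨h₁,
      Fin.forall_fin_two.2 ⟨hone h₂, h₃⟩⟩⟩

/-- The change of slope coordinates that turns `crossSum` into the difference of the norms of two
linear forms. -/
def slopeForms : (Fin 4 → ℂ) ≃ₜ LinearForm × LinearForm where
  toFun z := ((z 0 + Complex.I * z 1, z 2 + z 1 + Complex.I * z 3),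
    (conj (z 0 - Complex.I * z 1), conj (z 2 + z 1 - Complex.I * z 3)))
  invFun x := ![(x.1.1 + conj x.2.1) / 2, -Complex.I / 2 * (x.1.1 - conj x.2.1),
    (x.1.2 + conj x.2.2) / 2 + Complex.I / 2 * (x.1.1 - conj x.2.1),
    -Complex.I / 2 * (x.1.2 - conj x.2.2)]
  left_inv z := by
    ext i
    fin_cases i <;> simp only [Matrix.cons_val, Fin.zero_eta, Fin.mk_one, Fin.reduceFinMk,
      Complex.conj_conj] <;> ring_nf <;> simp only [Complex.I_sq] <;> ring
  right_inv x := by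
    ext <;> simp only [Matrix.cons_val, map_sub, map_add, map_mul, map_div₀, map_neg,
      Complex.conj_I, Complex.conj_conj, map_ofNat] <;> ring_nf <;> simp only [Complex.I_sq] <;>
      ring
  continuous_toFun := by fun_prop
  continuous_invFun := by
    refine continuous_pi fun i ↦ ?_
    fin_cases i <;> simp only [Fin.zero_eta, Fin.mk_one, Fin.reduceFinMk, Matrix.cons_val] <;>
      fun_prop

lemma formNormSq_slopeForms (z : Fin 4 → ℂ) :
    formNormSq (slopeForms z).2 - formNormSq (slopeForms z).1 = 4 * crossSum z := by
  simp only [slopeForms, formNormSq, crossSum, cross, Homeomorph.homeomorph_mk_coe, Equiv.coe_fn_mk,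
    Complex.normSq_apply, map_sub, map_add, map_mul, Complex.conj_I, Complex.add_re,
    Complex.add_im, Complex.sub_re, Complex.sub_im, Complex.mul_re, Complex.mul_im,
    Complex.neg_re, Complex.neg_im, Complex.conj_re, Complex.conj_im, Complex.I_re, Complex.I_im]
  ring

lemma slopeForms_comp_rotation (a : Circle) (z : Fin 4 → ℂ) : slopeForms (rotation a ∘ z) =
    ((a : ℂ) • (slopeForms z).1, conj (a : ℂ) • (slopeForms z).2) := by
  ext <;> simp only [slopeForms, Homeomorph.homeomorph_mk_coe, Equiv.coe_fn_mk, map_sub, map_add,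
    map_mul, Complex.conj_I, Function.comp_apply, rotation_apply, Prod.smul_mk, smul_eq_mul] <;>
    ring

lemma slopeForms_comp_conj (z : Fin 4 → ℂ) :
    slopeForms (Complex.conjLIE ∘ z) = (slopeForms z).swap := by
  ext <;> simp [slopeForms]

/-- The quadruples of slopes of configurations. -/
abbrev SlopeSpace : Type := {z : Fin 4 → ℂ // crossSum z = 0}

/-- Slopes of configurations correspond to balanced pairs of forms. -/
def slopeBalancedForms : SlopeSpace ≃ₜ BalancedForms :=
  slopeForms.subtype fun z ↦ by
    rw [eq_comm (a := formNormSq _), ← sub_eq_zero (a := formNormSq _), formNormSq_slopeForms]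
    simp

lemma formMul_slopeForms_eq_iff (z z' : SlopeSpace) :
    formMul (slopeBalancedForms z).1 = formMul (slopeBalancedForms z').1 ↔
      ∃ g : ℂ ≃ₗᵢ[ℝ] ℂ, z'.1 = g ∘ z.1 := by
  have hrot (a : Circle) : slopeForms z'.1 =
      ((a : ℂ) • (slopeForms z.1).1, conj (a : ℂ) • (slopeForms z.1).2) ↔
      z'.1 = rotation a ∘ z.1 := by
    rw [← slopeForms_comp_rotation, slopeForms.injective.eq_iff]
  have hrefl (a : Circle) : slopeForms z'.1 =
      ((a : ℂ) • (slopeForms z.1).2, conj (a : ℂ) • (slopeForms z.1).1) ↔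
      z'.1 = Complex.conjLIE.trans (rotation a) ∘ z.1 := by
    have h := slopeForms_comp_rotation a (Complex.conjLIE ∘ z.1)
    rw [slopeForms_comp_conj] at h
    exact (congrArg (slopeForms z'.1 = ·) h).symm.to_iff.trans slopeForms.injective.eq_iff
  rw [formMul_eq_iff]
  constructor
  · rintro ⟨u, hu, h | h⟩
    · exact ⟨_, (hrot ⟨u, mem_sphere_zero_iff_norm.2 hu⟩).1 h⟩
    · exact ⟨_, (hrefl ⟨u, mem_sphere_zero_iff_norm.2 hu⟩).1 h⟩
  · rintro ⟨g, hg⟩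
    obtain ⟨a, rfl | rfl⟩ := linear_isometry_complex g
    · exact ⟨a, a.norm_coe, .inl ((hrot a).2 hg)⟩
    · exact ⟨a, a.norm_coe, .inr ((hrefl a).2 hg)⟩

lemma ofSlopes_ne_zero (z : Fin 4 → ℂ) (i : Fin 4) : ofSlopes z i ≠ 0 := by
  have hpartner (p q : ℂ) : slopePartner p q ≠ 0 := fun h ↦ by
    have hfst := congrArg Prod.fst (planarMul_slopePartner p q)
    simp only [h, planarMul, Prod.fst_zero, Prod.snd_zero, mul_zero, inner_zero_right, sub_zero,
      Prod.smul_fst, smul_eq_mul, mul_one] at hfst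
    exact (by positivity : (0 : ℝ) < 1 + ‖p‖ ^ 2).ne hfst
  fin_cases i <;> simp [ofSlopes, hpartner]

/-- The chart at central configurations. -/
def configOfSlopes (z : SlopeSpace) : {v : Config relatorForm | NearCentral v.1} :=
  ⟨⟨ofSlopes z.1, ofSlopes_ne_zero z.1, by
    rw [relatorForm_eq_crossSum (nearCentral_ofSlopes z.1), slopes_ofSlopes, z.2, mul_zero]⟩,
    nearCentral_ofSlopes z.1⟩

/-- The slopes of a configuration near a central one. -/
def slopesOfConfig (v : {v : Config relatorForm | NearCentral v.1}) : SlopeSpace :=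
  ⟨slopes v.1.1, by
    have h := v.1.2.2
    rw [relatorForm_eq_crossSum v.2] at h
    exact (mul_eq_zero_iff_left (mul_pos v.2.1.2 v.2.2.2).ne').1 h⟩

lemma continuous_planarMul {X : Type*} [TopologicalSpace X] {a b : X → PlanarVec}
    (ha : Continuous a) (hb : Continuous b) : Continuous fun x ↦ planarMul (a x) (b x) := by
  unfold planarMul
  fun_prop

lemma continuous_slopePartner {X : Type*} [TopologicalSpace X] {p q : X → ℂ}
    (hp : Continuous p) (hq : Continuous q) : Continuous fun x ↦ slopePartner (p x) (q x) := by
  unfold slopePartner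
  fun_prop

lemma continuous_configOfSlopes : Continuous configOfSlopes := by
  have hz (k : Fin 4) : Continuous fun z : SlopeSpace ↦ z.1 k :=
    (continuous_apply k).comp continuous_subtype_val
  exact .subtype_mk (.subtype_mk (continuous_pi (Fin.forall_fin_succ.2
    ⟨continuous_const.prodMk (hz 0), Fin.forall_fin_succ.2 ⟨continuous_slopePartner (hz 0) (hz 1),
    Fin.forall_fin_two.2 ⟨continuous_const.prodMk (hz 2),
      continuous_slopePartner (hz 2) (hz 3)⟩⟩⟩)) _) _

lemma isOpen_nearCentral : IsOpen {v : Config relatorForm | NearCentral v.1} := by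
  have h := continuous_config_apply (F := relatorForm)
  exact ((isOpen_lt continuous_const (h 0).fst).inter
    (isOpen_lt continuous_const (continuous_planarMul (h 0) (h 1)).fst)).inter
    ((isOpen_lt continuous_const (h 2).fst).inter
      (isOpen_lt continuous_const (continuous_planarMul (h 2) (h 3)).fst))

lemma continuous_slopesOfConfig : Continuous slopesOfConfig := by
  have h (i : Fin 4) : Continuous fun v : {v : Config relatorForm | NearCentral v.1} ↦ v.1.1 i :=
    (continuous_config_apply i).comp continuous_subtype_val
  have hslope {a : {v : Config relatorForm | NearCentral v.1} → PlanarVec} (ha : Continuous a)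
      (hpos : ∀ v, 0 < (a v).1) : Continuous fun v ↦ planarSlope (a v) :=
    (ha.fst.inv₀ fun v ↦ (hpos v).ne').smul ha.snd
  refine .subtype_mk (continuous_pi (Fin.forall_fin_succ.2 ⟨?_, Fin.forall_fin_succ.2 ⟨?_,
    Fin.forall_fin_two.2 ⟨?_, ?_⟩⟩⟩)) _
  · exact hslope (h 0) fun v ↦ v.2.1.1
  · exact hslope (continuous_planarMul (h 0) (h 1)) fun v ↦ v.2.1.2
  · exact hslope (h 2) fun v ↦ v.2.2.1
  · exact hslope (continuous_planarMul (h 2) (h 3)) fun v ↦ v.2.2.2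

variable {χ : Type*} [TopologicalSpace χ] {ψ : Config relatorForm → χ}

lemma IsModel.isLocallyEuclideanAt_of_nearCentral (hψ : IsModel relatorForm ψ)
    {v : Config relatorForm} (hv : NearCentral v.1) : IsLocallyEuclideanAt 6 (ψ v) := by
  have hret (w : {v : Config relatorForm | NearCentral v.1}) :
      ψ (configOfSlopes (slopesOfConfig w)) = ψ w :=
    hψ.eq_iff.2 (sameShape_ofSlopes_slopes w.2)
  have hfib (z z' : SlopeSpace) : ψ (configOfSlopes z) = ψ (configOfSlopes z') ↔
      formMul (slopeBalancedForms z).1 = formMul (slopeBalancedForms z').1 :=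
    hψ.eq_iff.trans (sameShape_ofSlopes_iff.trans (formMul_slopeForms_eq_iff z z').symm)
  obtain ⟨j, hj, hjs⟩ := exists_isOpenEmbedding_of_isQuotientMap
    (isQuotientMap_formMul.comp slopeBalancedForms.isQuotientMap)
    (hψ.continuous.comp (continuous_subtype_val.comp continuous_configOfSlopes))
    (isOpenMap_comp_of_retraction hψ.isOpenMap isOpen_nearCentral continuous_slopesOfConfig
      (fun z ↦ Subtype.ext (slopes_ofSlopes z.1)) hret) hfib
  let L : (Fin 6 → ℝ) ≃L[ℝ] ℂ × ℂ × ℂ := ContinuousLinearEquiv.ofFinrankEq (by simp)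
  have h := isLocallyEuclideanAt_of_isOpenEmbedding (hj.comp L.toHomeomorph.isOpenEmbedding)
    (L.symm (formMul (slopeBalancedForms (slopesOfConfig ⟨v, hv⟩)).1))
  rw [Function.comp_apply, L.coe_toHomeomorph, L.apply_symm_apply] at h
  exact (hjs (slopesOfConfig ⟨v, hv⟩)).trans (hret ⟨v, hv⟩) ▸ h

end CentralPoints

section Transport

variable {F : ContinuousMultilinearMap ℝ (fun _ : Fin 4 ↦ PlanarVec) ℝ}

/-- The homeomorphism rescaling the entries of a configuration by nonzero factors. -/
def rescale (c : Fin 4 → ℝˣ) : Config F ≃ₜ Config F where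
  toFun v := ⟨fun i ↦ c i • v.1 i, fun i ↦ (smul_ne_zero_iff_ne _).2 (v.2.1 i),
    (F.map_smul_univ (fun i ↦ (c i : ℝ)) v.1).trans (by rw [v.2.2, smul_zero])⟩
  invFun v := ⟨fun i ↦ (c i)⁻¹ • v.1 i, fun i ↦ (smul_ne_zero_iff_ne _).2 (v.2.1 i),
    (F.map_smul_univ (fun i ↦ ((c i)⁻¹ : ℝˣ)) v.1).trans (by rw [v.2.2, smul_zero])⟩
  left_inv v := Subtype.ext (funext fun i ↦ inv_smul_smul (c i) _)
  right_inv v := Subtype.ext (funext fun i ↦ smul_inv_smul (c i) _)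
  continuous_toFun := .subtype_mk (continuous_pi fun i ↦ (continuous_config_apply i).const_smul _) _
  continuous_invFun :=
    .subtype_mk (continuous_pi fun i ↦ (continuous_config_apply i).const_smul _) _

lemma sameShape_rescale_iff (c : Fin 4 → ℝˣ) {v w : Config F} :
    SameShape (rescale c v).1 (rescale c w).1 ↔ SameShape v.1 w.1 := by
  refine exists₂_congr fun g t ↦ and_congr_right fun _ ↦ forall_congr' fun i ↦ ?_
  have hcomm : t i • planarIso g (c i • v.1 i) = c i • t i • planarIso g (v.1 i) := by
    rw [Units.smul_def, map_smul, smul_comm, Units.smul_def]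
  exact (congrArg (c i • w.1 i = ·) hcomm).to_iff.trans (smul_left_cancel_iff (c i))

/-- The homeomorphism permuting the entries of a configuration. -/
def permute (σ : Equiv.Perm (Fin 4)) : Config (F.domDomCongr σ) ≃ₜ Config F where
  toFun v := ⟨v.1 ∘ σ, fun i ↦ v.2.1 (σ i), v.2.2⟩
  invFun v := ⟨v.1 ∘ σ.symm, fun i ↦ v.2.1 (σ.symm i), by
    simpa [Function.comp_def] using v.2.2⟩
  left_inv v := Subtype.ext (funext fun i ↦ congrArg v.1 (σ.apply_symm_apply i))
  right_inv v := Subtype.ext (funext fun i ↦ congrArg v.1 (σ.symm_apply_apply i))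
  continuous_toFun := .subtype_mk (continuous_pi fun i ↦ continuous_config_apply (σ i)) _
  continuous_invFun := .subtype_mk (continuous_pi fun i ↦ continuous_config_apply (σ.symm i)) _

lemma sameShape_comp_iff (σ : Equiv.Perm (Fin 4)) {v w : Fin 4 → PlanarVec} :
    SameShape (v ∘ σ) (w ∘ σ) ↔ SameShape v w := by
  constructor
  · rintro ⟨g, t, ht, h⟩
    exact ⟨g, t ∘ σ.symm, fun i ↦ ht _, fun i ↦ by simpa using h (σ.symm i)⟩
  · rintro ⟨g, t, ht, h⟩
    exact ⟨g, t ∘ σ, fun i ↦ ht _, fun i ↦ h (σ i)⟩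

variable {χ : Type*} [TopologicalSpace χ] {ψ : Config F → χ}

lemma IsModel.comp_rescale (hψ : IsModel F ψ) (c : Fin 4 → ℝˣ) :
    IsModel F (ψ ∘ rescale c) where
  continuous := hψ.continuous.comp (rescale c).continuous
  isOpenMap := hψ.isOpenMap.comp (rescale c).isOpenMap
  eq_iff := hψ.eq_iff.trans (sameShape_rescale_iff c)
  map_planarIso := hψ.map_planarIso
  map_conj := hψ.map_conj

lemma IsModel.comp_permute (hψ : IsModel F ψ) (σ : Equiv.Perm (Fin 4)) :
    IsModel (F.domDomCongr σ) (ψ ∘ permute σ) where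
  continuous := hψ.continuous.comp (permute σ).continuous
  isOpenMap := hψ.isOpenMap.comp (permute σ).isOpenMap
  eq_iff := hψ.eq_iff.trans (sameShape_comp_iff σ)
  map_planarIso g := hψ.map_planarIso g
  map_conj _ := hψ.map_conj _

lemma IsModel.isLocallyEuclideanAt_of_central {ψ : Config relatorForm → χ}
    (hψ : IsModel relatorForm ψ) {v : Config relatorForm} (hv : ∀ i, (v.1 i).2 = 0) :
    IsLocallyEuclideanAt 6 (ψ v) := by
  have hfst (i : Fin 4) : (v.1 i).1 ≠ 0 := fun h ↦ v.2.1 i (Prod.ext h (hv i))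
  let c (i : Fin 4) : ℝˣ := Units.mk0 _ (hfst i)
  have hone : ((rescale c).symm v).1 = fun _ ↦ (1, 0) := funext fun i ↦ Prod.ext
    (inv_mul_cancel₀ (hfst i)) ((congrArg _ (hv i)).trans (smul_zero _))
  have hnear : NearCentral ((rescale c).symm v).1 := by
    simp [hone, NearCentral, planarMul]
  simpa using (hψ.comp_rescale c).isLocallyEuclideanAt_of_nearCentral hnear

end Transport

section Frames

/-- The invertible linear map with `(1, 0) ↦ (t, x)`, `(0, 1) ↦ (-x, t)` and `(0, I) ↦ (0, I)`,
for `(t, x) ≠ 0`. It commutes with conjugation. -/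
def realFrame {t x : ℝ} (h : t ^ 2 + x ^ 2 ≠ 0) : PlanarVec ≃L[ℝ] PlanarVec :=
  (LinearEquiv.ofInjectiveEndo
    { toFun := fun v ↦ (t * v.1 - x * v.2.re, ⟨x * v.1 + t * v.2.re, v.2.im⟩)
      map_add' := fun v w ↦ by
        refine Prod.ext ?_ (Complex.ext ?_ ?_) <;>
          simp only [Prod.fst_add, Prod.snd_add, Complex.add_re, Complex.add_im] <;> ring
      map_smul' := fun c v ↦ by
        refine Prod.ext ?_ (Complex.ext ?_ ?_) <;>
          simp only [Prod.smul_fst, Prod.smul_snd, Complex.smul_re, Complex.smul_im, smul_eq_mul,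
            RingHom.id_apply] <;> ring }
    fun v w hvw ↦ by
      simp only [LinearMap.coe_mk, AddHom.coe_mk, Prod.mk.injEq, Complex.mk.injEq] at hvw
      obtain ⟨h₁, h₂, h₃⟩ := hvw
      exact Prod.ext (mul_left_cancel₀ h (by linear_combination t * h₁ + x * h₂))
        (Complex.ext (mul_left_cancel₀ h (by linear_combination t * h₂ - x * h₁)) h₃)
    ).toContinuousLinearEquiv

lemma realFrame_apply {t x : ℝ} (h : t ^ 2 + x ^ 2 ≠ 0) (v : PlanarVec) :
    realFrame h v = (t * v.1 - x * v.2.re, ⟨x * v.1 + t * v.2.re, v.2.im⟩) := rfl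

lemma realFrame_conj {t x : ℝ} (h : t ^ 2 + x ^ 2 ≠ 0) (v : PlanarVec) :
    realFrame h (planarIso Complex.conjLIE v) = planarIso Complex.conjLIE (realFrame h v) := by
  refine Prod.ext ?_ (Complex.ext ?_ ?_) <;> simp [realFrame_apply]

lemma exists_functional_apply_eq_one {a : PlanarVec} (ha : a ≠ 0) :
    ∃ ℓ : PlanarVec →L[ℝ] ℝ, ℓ a = 1 ∧ (a.2.im ≠ 0 → ∀ v : PlanarVec, v.2.im = a.2.im * ℓ v) := by
  by_cases him : a.2.im = 0
  · obtain ⟨ℓ, hℓ⟩ := SeparatingDual.exists_eq_one (R := ℝ) ha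
    exact ⟨ℓ, hℓ, fun h ↦ (h him).elim⟩
  · exact ⟨a.2.im⁻¹ • Complex.imCLM.comp (.snd ℝ ℝ ℂ), inv_mul_cancel₀ him,
      fun _ v ↦ (mul_inv_cancel_left₀ him v.2.im).symm⟩

lemma exists_frame {ℓ : PlanarVec →L[ℝ] ℝ} {a : PlanarVec} (ha : ℓ a = 1) :
    ∃ φ : PlanarVec ≃L[ℝ] PlanarVec, φ (1, 0) = a ∧ ∀ v, ℓ (φ v) = v.1 := by
  have hℓ : (ℓ : PlanarVec →ₗ[ℝ] ℝ) ≠ 0 := fun h ↦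
    one_ne_zero (ha.symm.trans (LinearMap.congr_fun h a))
  have hker : Module.finrank ℝ ℂ = Module.finrank ℝ ℓ.ker := by
    have h := Module.Dual.finrank_ker_add_one_of_ne_zero hℓ
    simp only [Module.finrank_prod, Module.finrank_self, Complex.finrank_real_complex] at h ⊢
    omega
  let L : ℂ ≃L[ℝ] ℓ.ker := .ofFinrankEq hker
  let e := ContinuousLinearEquiv.equivOfRightInverse ℓ (.toSpanSingleton ℝ a) fun t ↦ by simp [ha]
  refine ⟨((ContinuousLinearEquiv.refl ℝ ℝ).prodCongr L).trans e.symm, ?_, fun v ↦ ?_⟩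
  · simp [e]
  · have h : ℓ (L v.2) = 0 := (L v.2).2
    simp [e, ha, h]

lemma exists_frame_of_ker {ℓ : PlanarVec →L[ℝ] ℝ} {a e : PlanarVec} (ha : ℓ a = 1) (he : ℓ e = 0)
    (he₀ : e ≠ 0) : ∃ φ : PlanarVec ≃L[ℝ] PlanarVec,
      φ (1, 0) = a ∧ φ (0, Complex.I) = e ∧ ∀ v, ℓ (φ v) = v.1 := by
  obtain ⟨φ, hφa, hφ⟩ := exists_frame ha
  have hfst : (φ.symm e).1 = 0 := by rw [← hφ, φ.apply_symm_apply, he]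
  have hsnd : (φ.symm e).2 ≠ 0 := fun h ↦
    he₀ ((map_eq_zero_iff _ φ.symm.injective).1 (Prod.ext hfst h))
  obtain ⟨A, hA⟩ := SeparatingDual.exists_continuousLinearEquiv_apply_eq (R := ℝ) Complex.I_ne_zero
    hsnd
  refine ⟨((ContinuousLinearEquiv.refl ℝ ℝ).prodCongr A).trans φ, by simp [hφa], ?_, by simp [hφ]⟩
  simp only [ContinuousLinearEquiv.trans_apply, ContinuousLinearEquiv.prodCongr_apply, hA,
    ContinuousLinearEquiv.refl_apply, ← hfst, Prod.mk.eta, φ.apply_symm_apply]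

end Frames

section SlotChart

/-- Coordinates of the charts at non-central points: the real parts of four slopes and the imaginary
parts of the last two. -/
abbrev ChartSpace : Type := (Fin 4 → ℝ) × ℂ

/-- The coordinates of a quadruple of slopes. -/
def coords (ζ : Fin 4 → ℂ) : ChartSpace := (fun k ↦ (ζ k).re, ⟨(ζ 2).im, (ζ 3).im⟩)

/-- The slopes with given coordinates and vanishing imaginary parts in the slots `0` and `1`. -/
def ofCoords (o : ChartSpace) : Fin 4 → ℂ := ![o.1 0, o.1 1, ⟨o.1 2, o.2.re⟩, ⟨o.1 3, o.2.im⟩]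

/-- The quadruple whose `k`-th entry has slope `ζ k` with respect to the frame `φ k`. -/
def framed (φ : Fin 4 → PlanarVec ≃L[ℝ] PlanarVec) (ζ : Fin 4 → ℂ) : Fin 4 → PlanarVec :=
  fun k ↦ φ k (1, ζ k)

/-- The derivative of `F` at `v` in the direction `φ 1 (0, I)` of the slot `1`. -/
def pivot (F : ContinuousMultilinearMap ℝ (fun _ : Fin 4 ↦ PlanarVec) ℝ)
    (φ : Fin 4 → PlanarVec ≃L[ℝ] PlanarVec) (v : Fin 4 → PlanarVec) : ℝ :=
  F (Function.update v 1 (φ 1 (0, Complex.I)))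

/-- The slopes with coordinates `o` whose slot `1` is completed so that `F` vanishes. -/
def solve (F : ContinuousMultilinearMap ℝ (fun _ : Fin 4 ↦ PlanarVec) ℝ)
    (φ : Fin 4 → PlanarVec ≃L[ℝ] PlanarVec) (o : ChartSpace) : Fin 4 → ℂ :=
  Function.update (ofCoords o) 1
    ⟨o.1 1, -(F (framed φ (ofCoords o)) / pivot F φ (framed φ (ofCoords o)))⟩

/-- `‖x‖` times the rotation of the plane by `conj x / ‖x‖`, which makes the component `x` of a
vector real and positive; scaled so as to be continuous also at `x = 0`. -/
def align (x : ℂ) (a : PlanarVec) : PlanarVec := (‖x‖ * a.1, conj x * a.2)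

variable {F : ContinuousMultilinearMap ℝ (fun _ : Fin 4 ↦ PlanarVec) ℝ}
  {φ : Fin 4 → PlanarVec ≃L[ℝ] PlanarVec}

lemma coords_solve (o : ChartSpace) : coords (solve F φ o) = o :=
  Prod.ext (funext fun k ↦ by fin_cases k <;> rfl) rfl

lemma solve_injective : Function.Injective (solve F φ) :=
  Function.LeftInverse.injective coords_solve

lemma update_ofCoords_coords {ζ : Fin 4 → ℂ} (h₀ : (ζ 0).im = 0) :
    Function.update (ofCoords (coords ζ)) 1 (ζ 1) = ζ := by
  refine funext fun k ↦ ?_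
  fin_cases k
  · exact Complex.ext rfl h₀.symm
  all_goals rfl

lemma framed_update (ζ : Fin 4 → ℂ) (z : ℂ) :
    framed φ (Function.update ζ 1 z) = Function.update (framed φ ζ) 1 (φ 1 (1, z)) := by
  refine funext fun k ↦ ?_
  rcases eq_or_ne k 1 with rfl | hk
  · simp [framed]
  · simp [framed, hk]

lemma pivot_framed_update (ζ : Fin 4 → ℂ) (z : ℂ) :
    pivot F φ (framed φ (Function.update ζ 1 z)) = pivot F φ (framed φ ζ) := by
  rw [framed_update, pivot, Function.update_idem, pivot]

lemma map_framed_ofCoords (o : ChartSpace) (y : ℝ) :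
    F (framed φ (Function.update (ofCoords o) 1 ⟨o.1 1, y⟩)) =
      F (framed φ (ofCoords o)) + y * pivot F φ (framed φ (ofCoords o)) := by
  have hsplit : φ 1 (1, ⟨o.1 1, y⟩) = framed φ (ofCoords o) 1 + y • φ 1 (0, Complex.I) := by
    rw [framed, ← map_smul, ← map_add]
    exact congrArg _ (Prod.ext (by simp) (Complex.ext (by simp [ofCoords]) (by simp [ofCoords])))
  rw [framed_update, hsplit, F.map_update_add, F.map_update_smul, Function.update_eq_self, pivot,
    smul_eq_mul]

lemma map_framed_eq_zero_iff {ζ : Fin 4 → ℂ} (h₀ : (ζ 0).im = 0)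
    (hp : pivot F φ (framed φ ζ) ≠ 0) : F (framed φ ζ) = 0 ↔ solve F φ (coords ζ) = ζ := by
  have hζ := update_ofCoords_coords h₀
  rw [← hζ, pivot_framed_update] at hp
  have hmap := map_framed_ofCoords (F := F) (φ := φ) (coords ζ) (ζ 1).im
  rw [show (⟨(coords ζ).1 1, (ζ 1).im⟩ : ℂ) = ζ 1 from rfl, hζ] at hmap
  nth_rw 3 [← hζ]
  rw [hmap, solve, (Function.update_injective _ _).eq_iff, Complex.ext_iff, neg_eq_iff_eq_neg,
    div_eq_iff hp, neg_mul, ← add_eq_zero_iff_eq_neg]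
  exact (and_iff_right rfl).symm

lemma map_framed_solve {o : ChartSpace} (ho : pivot F φ (framed φ (ofCoords o)) ≠ 0) :
    F (framed φ (solve F φ o)) = 0 := by
  rw [map_framed_eq_zero_iff (by simp [solve, ofCoords]) (by rwa [solve, pivot_framed_update]),
    coords_solve]

lemma framed_ne_zero (ζ : Fin 4 → ℂ) (k : Fin 4) : framed φ ζ k ≠ 0 :=
  (map_ne_zero_iff _ (φ k).injective).2 fun h ↦ one_ne_zero (congrArg Prod.fst h)

lemma eq_of_framed_eq_smul {ζ ζ' : Fin 4 → ℂ} {k : Fin 4} {t : ℝ}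
    (h : framed φ ζ' k = t • framed φ ζ k) : ζ' k = ζ k := by
  rw [framed, framed, ← map_smul, (φ k).injective.eq_iff, Prod.smul_mk, Prod.mk.injEq,
    smul_eq_mul, mul_one] at h
  rw [h.2, ← h.1, one_smul]

variable (F φ)

/-- The coordinates for which the slot `1` can be solved for. -/
def chartSource : Set ChartSpace := {o | pivot F φ (framed φ (ofCoords o)) ≠ 0}

variable {F φ} in
lemma coords_mem_chartSource_iff {ζ : Fin 4 → ℂ} (h₀ : (ζ 0).im = 0) :
    coords ζ ∈ chartSource F φ ↔ pivot F φ (framed φ ζ) ≠ 0 := by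
  conv_rhs => rw [← update_ofCoords_coords h₀, pivot_framed_update]
  rfl

/-- The configuration with coordinates `o`. -/
def chartConfig (o : chartSource F φ) : Config F :=
  ⟨framed φ (solve F φ o), framed_ne_zero _, map_framed_solve o.2⟩

/-- The configurations which have coordinates after rotation. -/
def chartTarget : Set (Config F) :=
  {v | (∀ k, 0 < ((φ k).symm (align (v.1 0).2 (v.1 k))).1) ∧
    pivot F φ (align (v.1 0).2 ∘ v.1) ≠ 0}

variable {F φ}

lemma exists_align_eq {x : ℂ} (hx : x ≠ 0) :
    ∃ g : ℂ ≃ₗᵢ[ℝ] ℂ, ∀ a, align x a = ‖x‖ • planarIso g a := by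
  have hnorm : (‖x‖ : ℂ) ≠ 0 := Complex.ofReal_ne_zero.2 (norm_ne_zero_iff.2 hx)
  obtain ⟨u, hu⟩ : ∃ u : Circle, (u : ℂ) = conj x / ‖x‖ :=
    ⟨⟨_, mem_sphere_zero_iff_norm.2 (by simp [hx])⟩, rfl⟩
  refine ⟨rotation u, fun a ↦ Prod.ext rfl ?_⟩
  simp only [align, Prod.smul_snd, planarIso_snd, rotation_apply, Complex.real_smul, hu]
  rw [← mul_assoc, mul_div_cancel₀ _ hnorm]

lemma continuous_align {X : Type*} [TopologicalSpace X] {x : X → ℂ} {a : X → PlanarVec}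
    (hx : Continuous x) (ha : Continuous a) : Continuous fun p ↦ align (x p) (a p) := by
  unfold align
  fun_prop

lemma continuous_complexMk {X : Type*} [TopologicalSpace X] {f g : X → ℝ} (hf : Continuous f)
    (hg : Continuous g) : Continuous fun x ↦ (⟨f x, g x⟩ : ℂ) :=
  Complex.equivRealProdCLM.symm.continuous.comp (hf.prodMk hg)

lemma continuous_coords : Continuous coords :=
  (by fun_prop : Continuous fun ζ : Fin 4 → ℂ ↦ fun k ↦ (ζ k).re).prodMk
    (continuous_complexMk (by fun_prop) (by fun_prop))

lemma continuous_ofCoords : Continuous ofCoords := by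
  have h (k : Fin 4) : Continuous fun o : ChartSpace ↦ (o.1 k : ℂ) := by fun_prop
  exact continuous_pi (Fin.forall_fin_succ.2 ⟨h 0, Fin.forall_fin_succ.2 ⟨h 1,
    Fin.forall_fin_two.2 ⟨continuous_complexMk (by fun_prop) (by fun_prop),
      continuous_complexMk (by fun_prop) (by fun_prop)⟩⟩⟩)

lemma continuous_framed : Continuous (framed φ) := by
  unfold framed
  fun_prop

lemma continuous_pivot : Continuous (pivot F φ) :=
  F.cont.comp (continuous_id.update 1 continuous_const)

lemma isOpen_chartSource : IsOpen (chartSource F φ) :=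
  isOpen_ne_fun (continuous_pivot.comp (continuous_framed.comp continuous_ofCoords))
    continuous_const

lemma continuous_chartConfig : Continuous (chartConfig F φ) := by
  have hcoords : Continuous fun o : chartSource F φ ↦ framed φ (ofCoords o) :=
    continuous_framed.comp (continuous_ofCoords.comp continuous_subtype_val)
  have him : Continuous fun o : chartSource F φ ↦
      -(F (framed φ (ofCoords o)) / pivot F φ (framed φ (ofCoords o))) :=
    ((F.cont.comp hcoords).div (continuous_pivot.comp hcoords) fun o ↦ o.2).neg
  have hsolve : Continuous fun o : chartSource F φ ↦ solve F φ o :=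
    (continuous_ofCoords.comp continuous_subtype_val).update 1
      (continuous_complexMk (by fun_prop) him)
  exact .subtype_mk (continuous_framed.comp hsolve) _

lemma isOpen_chartTarget : IsOpen (chartTarget F φ) := by
  have hv (k : Fin 4) : Continuous fun v : Config F ↦ align (v.1 0).2 (v.1 k) :=
    continuous_align (continuous_config_apply 0).snd (continuous_config_apply k)
  have hpos : IsOpen {v : Config F | ∀ k, 0 < ((φ k).symm (align (v.1 0).2 (v.1 k))).1} := by
    rw [ofPred_forall]
    exact isOpen_iInter_of_finite fun k ↦
      isOpen_lt continuous_const ((φ k).symm.continuous.comp (hv k)).fst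
  exact hpos.inter (isOpen_ne_fun (continuous_pivot.comp (continuous_pi hv)) continuous_const)

/-- The frame of the slot `0`: vectors `(s, 1)` are those of real slope. -/
def baseFrame : PlanarVec ≃L[ℝ] PlanarVec := realFrame (t := 0) (x := 1) (by norm_num)

lemma baseFrame_apply (v : PlanarVec) : baseFrame v = (-v.2.re, ⟨v.1, v.2.im⟩) := by
  simp [baseFrame, realFrame_apply]

lemma baseFrame_symm_align_self (a : PlanarVec) :
    baseFrame.symm (align a.2 a) = (‖a.2‖ ^ 2, ((-(‖a.2‖ * a.1) : ℝ) : ℂ)) := by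
  rw [ContinuousLinearEquiv.symm_apply_eq, baseFrame_apply, align,
    ← Complex.normSq_eq_conj_mul_self, Complex.normSq_eq_norm_sq]
  exact Prod.ext (by simp) (Complex.ext rfl rfl)

lemma align_one (a : PlanarVec) : align 1 a = a := by
  simp [align]

variable (φ) in
/-- The slopes, with respect to the frames `φ k`, of the entries of a rotated quadruple. -/
def frameSlopes (v : Fin 4 → PlanarVec) : Fin 4 → ℂ :=
  fun k ↦ planarSlope ((φ k).symm (align (v 0).2 (v k)))

lemma framed_frameSlopes {v : Fin 4 → PlanarVec} {k : Fin 4}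
    (hpos : 0 < ((φ k).symm (align (v 0).2 (v k))).1) :
    framed φ (frameSlopes φ v) k =
      ((φ k).symm (align (v 0).2 (v k))).1⁻¹ • align (v 0).2 (v k) := by
  rw [eq_inv_smul_iff₀ hpos.ne', framed, ← map_smul, frameSlopes, fst_smul_planarSlope hpos.ne',
    ContinuousLinearEquiv.apply_symm_apply]

lemma frameSlopes_framed {ζ : Fin 4 → ℂ} (h : (framed φ ζ 0).2 = 1) :
    frameSlopes φ (framed φ ζ) = ζ := by
  refine funext fun k ↦ ?_
  rw [frameSlopes, h, align_one, framed, ContinuousLinearEquiv.symm_apply_apply, planarSlope,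
    inv_one, one_smul]

lemma pivot_smul (c : Fin 4 → ℝ) (v : Fin 4 → PlanarVec) :
    c 1 * pivot F φ (fun k ↦ c k • v k) = (∏ k, c k) * pivot F φ v := by
  have hupd : (fun k ↦ c k • Function.update v 1 (φ 1 (0, Complex.I)) k) =
      Function.update (fun k ↦ c k • v k) 1 (c 1 • φ 1 (0, Complex.I)) := by
    refine funext fun k ↦ ?_
    rcases eq_or_ne k 1 with rfl | hk <;> simp [*]
  rw [pivot, pivot, ← smul_eq_mul, ← F.map_update_smul, ← hupd]
  exact F.map_smul_univ c (Function.update v 1 (φ 1 (0, Complex.I)))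

lemma pivot_smul_ne_zero {c : Fin 4 → ℝ} (hc : ∀ k, c k ≠ 0) {v : Fin 4 → PlanarVec}
    (hv : pivot F φ v ≠ 0) : pivot F φ (fun k ↦ c k • v k) ≠ 0 :=
  right_ne_zero_of_mul (pivot_smul c v ▸ mul_ne_zero (Finset.prod_ne_zero_iff.2 fun k _ ↦ hc k) hv)

variable {χ : Type*} [TopologicalSpace χ] {ψ : Config F → χ}

lemma IsModel.map_planarIso_eq_zero_iff (hψ : IsModel F ψ) (g : ℂ ≃ₗᵢ[ℝ] ℂ)
    {v : Fin 4 → PlanarVec} : F (fun k ↦ planarIso g (v k)) = 0 ↔ F v = 0 := by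
  refine ⟨fun h ↦ ?_, hψ.map_planarIso g⟩
  have hsymm := hψ.map_planarIso g.symm h
  have hcancel (a : PlanarVec) : planarIso g.symm (planarIso g a) = a :=
    Prod.ext rfl (g.symm_apply_apply a.2)
  simpa only [hcancel] using hsymm

lemma IsModel.map_align_eq_zero_iff (hψ : IsModel F ψ) {x : ℂ} (hx : x ≠ 0)
    {v : Fin 4 → PlanarVec} : F (align x ∘ v) = 0 ↔ F v = 0 := by
  obtain ⟨g, hg⟩ := exists_align_eq hx
  have hsmul := F.map_smul_univ (fun _ ↦ ‖x‖) fun k ↦ planarIso g (v k)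
  rw [Finset.prod_const, smul_eq_mul] at hsmul
  rw [show align x ∘ v = fun k ↦ ‖x‖ • planarIso g (v k) from funext fun k ↦ hg (v k), hsmul,
    mul_eq_zero_iff_left (pow_ne_zero _ (norm_ne_zero_iff.2 hx)), hψ.map_planarIso_eq_zero_iff]

lemma framed_zero_snd (hφ : φ 0 = baseFrame) {ζ : Fin 4 → ℂ} (h₀ : (ζ 0).im = 0) :
    (framed φ ζ 0).2 = 1 := by
  rw [framed, hφ, baseFrame_apply]
  exact Complex.ext rfl h₀

lemma solve_zero_im (o : ChartSpace) : (solve F φ o 0).im = 0 := rfl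

lemma frameSlopes_zero_im (hφ : φ 0 = baseFrame) (v : Fin 4 → PlanarVec) :
    (frameSlopes φ v 0).im = 0 := by
  rw [frameSlopes, hφ, baseFrame_symm_align_self, planarSlope, Complex.smul_im, Complex.ofReal_im,
    smul_zero]

lemma chartConfig_mem_chartTarget (hφ : φ 0 = baseFrame) (o : chartSource F φ) :
    chartConfig F φ o ∈ chartTarget F φ := by
  have hone : ((chartConfig F φ o).1 0).2 = 1 := framed_zero_snd hφ (solve_zero_im o.1)
  have hid : align 1 = id := funext align_one
  rw [chartTarget, mem_ofPred_eq, hone, hid]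
  refine ⟨fun k ↦ ?_, ?_⟩
  · simp [chartConfig, framed]
  · exact (pivot_framed_update (ofCoords o) _).trans_ne o.2

lemma snd_ne_zero_of_mem_chartTarget (hφ : φ 0 = baseFrame) {v : Config F}
    (hv : v ∈ chartTarget F φ) : (v.1 0).2 ≠ 0 := by
  have hpos := hv.1 0
  rw [hφ, baseFrame_symm_align_self] at hpos
  exact norm_ne_zero_iff.1 (ne_zero_pow two_ne_zero hpos.ne')

lemma pivot_frameSlopes_ne_zero {v : Config F} (hv : v ∈ chartTarget F φ) :
    pivot F φ (framed φ (frameSlopes φ v.1)) ≠ 0 := by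
  rw [show framed φ (frameSlopes φ v.1) = _ from funext fun k ↦ framed_frameSlopes (hv.1 k)]
  exact pivot_smul_ne_zero (fun k ↦ inv_ne_zero (hv.1 k).ne') hv.2

lemma coords_frameSlopes_mem_chartSource (hφ : φ 0 = baseFrame) {v : Config F}
    (hv : v ∈ chartTarget F φ) : coords (frameSlopes φ v.1) ∈ chartSource F φ :=
  (coords_mem_chartSource_iff (frameSlopes_zero_im hφ v.1)).2 (pivot_frameSlopes_ne_zero hv)

lemma sameShape_framed_frameSlopes (hφ : φ 0 = baseFrame) {v : Config F}
    (hv : v ∈ chartTarget F φ) : SameShape v.1 (framed φ (frameSlopes φ v.1)) := by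
  have hx := snd_ne_zero_of_mem_chartTarget hφ hv
  obtain ⟨g, hg⟩ := exists_align_eq hx
  refine ⟨g, _, fun k ↦ mul_pos (inv_pos.2 (hv.1 k)) (norm_pos_iff.2 hx), fun k ↦ ?_⟩
  rw [framed_frameSlopes (hv.1 k), hg, smul_smul, ← hg]

lemma continuous_frameSlopes :
    Continuous fun v : chartTarget F φ ↦ frameSlopes φ v.1.1 := by
  refine continuous_pi fun k ↦ ?_
  have hk (i : Fin 4) : Continuous fun v : chartTarget F φ ↦ v.1.1 i :=
    (continuous_config_apply i).comp continuous_subtype_val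
  have halign := (φ k).symm.continuous.comp (continuous_align (hk 0).snd (hk k))
  exact (halign.fst.inv₀ fun v ↦ (v.2.1 k).ne').smul halign.snd

lemma IsModel.solve_coords_frameSlopes (hψ : IsModel F ψ) (hφ : φ 0 = baseFrame) {v : Config F}
    (hv : v ∈ chartTarget F φ) :
    solve F φ (coords (frameSlopes φ v.1)) = frameSlopes φ v.1 := by
  refine (map_framed_eq_zero_iff (frameSlopes_zero_im hφ _) (pivot_frameSlopes_ne_zero hv)).1 ?_
  have halign : F (align (v.1 0).2 ∘ v.1) = 0 :=
    (hψ.map_align_eq_zero_iff (snd_ne_zero_of_mem_chartTarget hφ hv)).2 v.2.2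
  rw [show framed φ (frameSlopes φ v.1) = _ from funext fun k ↦ framed_frameSlopes (hv.1 k)]
  exact (F.map_smul_univ _ _).trans (smul_eq_zero_of_right _ halign)

/-- The coordinates of a configuration in the range of the chart. -/
def chartCoords (hφ : φ 0 = baseFrame) (v : chartTarget F φ) : chartSource F φ :=
  ⟨coords (frameSlopes φ v.1.1), coords_frameSlopes_mem_chartSource hφ v.2⟩

lemma IsModel.map_chartConfig_chartCoords (hψ : IsModel F ψ) (hφ : φ 0 = baseFrame)
    (v : chartTarget F φ) : ψ (chartConfig F φ (chartCoords hφ v)) = ψ v := by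
  refine (hψ.eq_iff.2 ?_).symm
  have hshape := sameShape_framed_frameSlopes hφ v.2
  rwa [← hψ.solve_coords_frameSlopes hφ v.2] at hshape

lemma IsModel.isOpenMap_chart (hψ : IsModel F ψ) (hφ : φ 0 = baseFrame) :
    IsOpenMap fun o ↦ ψ (chartConfig F φ o) := by
  refine isOpenMap_comp_of_retraction hψ.isOpenMap isOpen_chartTarget (r := chartCoords hφ)
    (G := fun o ↦ ⟨chartConfig F φ o, chartConfig_mem_chartTarget hφ o⟩)
    (.subtype_mk (continuous_coords.comp continuous_frameSlopes) _) (fun o ↦ Subtype.ext ?_)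
    (hψ.map_chartConfig_chartCoords hφ)
  exact (congrArg coords (frameSlopes_framed (framed_zero_snd hφ (solve_zero_im o.1)))).trans
    (coords_solve o.1)

lemma IsModel.isLocallyEuclideanAt_of_mem_chartTarget (hψ : IsModel F ψ) (hφ : φ 0 = baseFrame)
    {s : ChartSpace → ChartSpace} (hs : Continuous s) (hso : IsOpenMap s)
    (hshape : ∀ o ∈ chartSource F φ, ∀ o' ∈ chartSource F φ,
      SameShape (framed φ (solve F φ o)) (framed φ (solve F φ o')) ↔ s o = s o')
    {v : Config F} (hv : v ∈ chartTarget F φ) : IsLocallyEuclideanAt 6 (ψ v) := by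
  have hrank : Module.finrank ℝ ChartSpace = 6 := by simp [ChartSpace]
  rw [← hψ.map_chartConfig_chartCoords hφ ⟨v, hv⟩]
  exact isLocallyEuclideanAt_of_isOpenMap (s := fun o : chartSource F φ ↦ s o)
    (g := fun o ↦ ψ (chartConfig F φ o)) hrank (hs.comp continuous_subtype_val)
    (hso.comp isOpen_chartSource.isOpenMap_subtype_val)
    (hψ.continuous.comp continuous_chartConfig) (hψ.isOpenMap_chart hφ)
    (fun o o' ↦ hψ.eq_iff.trans (hshape o o.2 o' o'.2)) _

end SlotChart

section NonCentralPoints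

variable {F : ContinuousMultilinearMap ℝ (fun _ : Fin 4 ↦ PlanarVec) ℝ}
  {φ : Fin 4 → PlanarVec ≃L[ℝ] PlanarVec}

lemma SameShape.refl (v : Fin 4 → PlanarVec) : SameShape v v :=
  ⟨.refl ℝ ℂ, 1, fun _ ↦ one_pos, fun _ ↦ (one_smul ℝ _).symm⟩

lemma eq_or_eq_smul_conj_of_sameShape (hφ : φ 0 = baseFrame) {ζ ζ' : Fin 4 → ℂ}
    (h₀ : (ζ 0).im = 0) (h₀' : (ζ' 0).im = 0) (h : SameShape (framed φ ζ) (framed φ ζ')) :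
    ζ = ζ' ∨ ∃ t : Fin 4 → ℝ, (∀ k, 0 < t k) ∧
      ∀ k, framed φ ζ' k = t k • planarIso Complex.conjLIE (framed φ ζ k) := by
  obtain ⟨g, t, ht, hg⟩ := h
  have hsnd : 1 = t 0 • g 1 := by
    simpa [framed_zero_snd hφ h₀, framed_zero_snd hφ h₀'] using congrArg Prod.snd (hg 0)
  have ht₀ : t 0 = 1 := by
    simpa [norm_smul, abs_of_pos (ht 0)] using (congrArg norm hsnd).symm
  rw [ht₀, one_smul] at hsnd
  rcases linear_isometry_complex_aux hsnd.symm with rfl | rfl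
  · exact .inl (funext fun k ↦ (eq_of_framed_eq_smul (hg k)).symm)
  · exact .inr ⟨t, ht, hg⟩

lemma sameShape_solve_iff_of_free (hφ : φ 0 = baseFrame) {m : Fin 4} {c : ℝ} (hc : c ≠ 0)
    (hm : ∀ z, (φ m (1, z)).2.im = c) (o o' : ChartSpace) :
    SameShape (framed φ (solve F φ o)) (framed φ (solve F φ o')) ↔ o = o' := by
  constructor
  · intro h
    rcases eq_or_eq_smul_conj_of_sameShape hφ (solve_zero_im o) (solve_zero_im o') h with
      heq | ⟨t, ht, hconj⟩
    · exact solve_injective heq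
    · have him : c = t m * -c := by
        simpa [framed, hm] using congrArg (fun a : PlanarVec ↦ a.2.im) (hconj m)
      have hone : (1 + t m) * c = 0 := by linear_combination him
      exact ((mul_ne_zero (by linarith [ht m]) hc) hone).elim
  · rintro rfl
    exact .refl _

lemma framed_conj (hφ : ∀ k v, φ k (planarIso Complex.conjLIE v) =
      planarIso Complex.conjLIE (φ k v)) (ζ : Fin 4 → ℂ) :
    framed φ (conj ζ) = fun k ↦ planarIso Complex.conjLIE (framed φ ζ k) :=
  funext fun k ↦ hφ k (1, ζ k)

lemma coords_conj (ζ : Fin 4 → ℂ) : coords (conj ζ) = ((coords ζ).1, -(coords ζ).2) :=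
  Prod.ext rfl (Complex.ext rfl rfl)

variable {χ : Type*} [TopologicalSpace χ] {ψ : Config F → χ}

lemma IsModel.solve_eq_conj (hψ : IsModel F ψ)
    (hφ : ∀ k v, φ k (planarIso Complex.conjLIE v) = planarIso Complex.conjLIE (φ k v))
    {o : ChartSpace} (ho : o ∈ chartSource F φ) (ho' : (o.1, -o.2) ∈ chartSource F φ) :
    solve F φ (o.1, -o.2) = conj (solve F φ o) := by
  have hcoords : coords (conj (solve F φ o)) = (o.1, -o.2) := by rw [coords_conj, coords_solve]
  have h₀ : (conj (solve F φ o) 0).im = 0 := neg_eq_zero.2 (solve_zero_im o)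
  rw [← hcoords] at ho' ⊢
  refine (map_framed_eq_zero_iff h₀ ((coords_mem_chartSource_iff h₀).1 ho')).1 ?_
  rw [framed_conj hφ, hψ.map_conj, map_framed_solve ho, neg_zero]

lemma IsModel.sameShape_solve_iff_of_conj (hψ : IsModel F ψ) (hφ₀ : φ 0 = baseFrame)
    (hφ : ∀ k v, φ k (planarIso Complex.conjLIE v) = planarIso Complex.conjLIE (φ k v))
    {o o' : ChartSpace} (ho : o ∈ chartSource F φ) (ho' : o' ∈ chartSource F φ) :
    SameShape (framed φ (solve F φ o)) (framed φ (solve F φ o')) ↔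
      (o.1, o.2 ^ 2) = (o'.1, o'.2 ^ 2) := by
  rw [Prod.mk.injEq, eq_comm (a := o.2 ^ 2), sq_eq_sq_iff_eq_or_eq_neg]
  constructor
  · intro h
    rcases eq_or_eq_smul_conj_of_sameShape hφ₀ (solve_zero_im o) (solve_zero_im o') h with
      heq | ⟨t, -, hconj⟩
    · exact solve_injective heq ▸ ⟨rfl, .inl rfl⟩
    · have heq : solve F φ o' = conj (solve F φ o) := funext fun k ↦
        eq_of_framed_eq_smul ((hconj k).trans (congrArg _ (congrFun (framed_conj hφ _) k).symm))
      have hoo : o' = (o.1, -o.2) := by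
        rw [← coords_solve (F := F) (φ := φ) o', heq, coords_conj, coords_solve]
      exact hoo ▸ ⟨rfl, .inr rfl⟩
  · rintro ⟨h₁, h₂ | h₂⟩
    · rw [show o' = o from Prod.ext h₁.symm h₂]
      exact .refl _
    · obtain rfl : o' = (o.1, -o.2) := Prod.ext h₁.symm h₂
      rw [hψ.solve_eq_conj hφ ho ho', framed_conj hφ]
      exact ⟨Complex.conjLIE, 1, fun _ ↦ one_pos, fun _ ↦ (one_smul ℝ _).symm⟩

lemma align_update (x : ℂ) (v : Fin 4 → PlanarVec) (j : Fin 4) (w : PlanarVec) :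
    align x ∘ Function.update v j w = Function.update (align x ∘ v) j (align x w) :=
  Function.comp_update _ _ _ _

lemma align_self_snd_im (a : PlanarVec) : (align a.2 a).2.im = 0 := by
  rw [align, ← Complex.normSq_eq_conj_mul_self, Complex.ofReal_im]

lemma baseFrame_symm_align_self_pos {a : PlanarVec} (ha : a.2 ≠ 0) :
    0 < (baseFrame.symm (align a.2 a)).1 := by
  rw [baseFrame_symm_align_self]
  exact pow_pos (norm_pos_iff.2 ha) 2

lemma align_ne_zero {x : ℂ} (hx : x ≠ 0) {a : PlanarVec} (ha : a ≠ 0) : align x a ≠ 0 := by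
  obtain ⟨g, hg⟩ := exists_align_eq hx
  rw [hg]
  exact smul_ne_zero (norm_ne_zero_iff.2 hx) ((map_ne_zero_iff _ (planarIso g).injective).2 ha)

lemma exists_frame_pivot_ne_zero {a : Fin 4 → PlanarVec} (ha : F a = 0)
    {w : PlanarVec} (hw : F (Function.update a 1 w) ≠ 0) (ha₁ : a 1 ≠ 0) :
    ∃ φ : PlanarVec ≃L[ℝ] PlanarVec, φ (1, 0) = a 1 ∧
      ((a 1).2.im ≠ 0 → ∀ z, (φ (1, z)).2.im = (a 1).2.im) ∧
      F (Function.update a 1 (φ (0, Complex.I))) ≠ 0 := by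
  obtain ⟨ℓ, hℓ, him⟩ := exists_functional_apply_eq_one ha₁
  have hF : F (Function.update a 1 (w - ℓ w • a 1)) ≠ 0 := by
    rwa [F.map_update_sub, F.map_update_smul, Function.update_eq_self, ha, smul_zero, sub_zero]
  have he₀ : w - ℓ w • a 1 ≠ 0 := fun h ↦
    hF (F.map_coord_zero 1 (by rw [Function.update_self, h]))
  obtain ⟨φ, hφa, hφe, hφ⟩ := exists_frame_of_ker hℓ (by simp [hℓ]) he₀
  exact ⟨φ, hφa, fun h z ↦ by rw [him h, hφ, mul_one], by rwa [hφe]⟩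

lemma exists_frame_im_const {a : PlanarVec} (ha : a ≠ 0) :
    ∃ φ : PlanarVec ≃L[ℝ] PlanarVec, φ (1, 0) = a ∧
      (a.2.im ≠ 0 → ∀ z, (φ (1, z)).2.im = a.2.im) := by
  obtain ⟨ℓ, hℓ, him⟩ := exists_functional_apply_eq_one ha
  obtain ⟨φ, hφa, hφ⟩ := exists_frame hℓ
  exact ⟨φ, hφa, fun h z ↦ by rw [him h, hφ, mul_one]⟩

lemma IsModel.isLocallyEuclideanAt_of_im_ne_zero (hψ : IsModel F ψ) {v : Config F}
    (hx : (v.1 0).2 ≠ 0) {w : PlanarVec} (hw : F (Function.update v.1 1 w) ≠ 0) {m : Fin 4}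
    (hm : (align (v.1 0).2 (v.1 m)).2.im ≠ 0) : IsLocallyEuclideanAt 6 (ψ v) := by
  have ha (k : Fin 4) := align_ne_zero hx (v.2.1 k)
  rw [← (hψ.map_align_eq_zero_iff hx).ne, align_update] at hw
  obtain ⟨φ₁, hφa₁, him₁, hpivot⟩ :=
    exists_frame_pivot_ne_zero ((hψ.map_align_eq_zero_iff hx).2 v.2.2) hw (ha 1)
  choose φ hφa him using fun k ↦ exists_frame_im_const (ha k)
  have hfst {φ : PlanarVec ≃L[ℝ] PlanarVec} {a} (h : φ (1, 0) = a) : 0 < (φ.symm a).1 := by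
    simp [← h]
  refine hψ.isLocallyEuclideanAt_of_mem_chartTarget (φ := ![baseFrame, φ₁, φ 2, φ 3]) rfl
    continuous_id .id (fun o _ o' _ ↦ sameShape_solve_iff_of_free (m := m) rfl hm ?_ o o')
    ⟨?_, hpivot⟩
  · fin_cases m
    exacts [(hm (align_self_snd_im _)).elim, him₁ hm, him 2 hm, him 3 hm]
  · intro k
    fin_cases k
    exacts [baseFrame_symm_align_self_pos hx, hfst hφa₁, hfst (hφa 2), hfst (hφa 3)]

lemma IsModel.pivot_ne_zero_of_im_eq_zero (hψ : IsModel F ψ) {a : Fin 4 → PlanarVec}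
    (ha : ∀ k, (a k).2.im = 0) {w : PlanarVec} (hw : F (Function.update a 1 w) ≠ 0) :
    F (Function.update a 1 (0, Complex.I)) ≠ 0 := by
  have hsplit : w = (w.1, (w.2.re : ℂ)) + w.2.im • (0, Complex.I) :=
    Prod.ext (by simp) (Complex.ext (by simp) (by simp))
  have hreal : F (Function.update a 1 (w.1, (w.2.re : ℂ))) = 0 := by
    refine self_eq_neg.1 ((congrArg F (funext fun k ↦ ?_)).trans (hψ.map_conj _))
    rcases eq_or_ne k 1 with rfl | hk
    · rw [Function.update_self]
      exact Prod.ext rfl (Complex.conj_ofReal _).symm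
    · rw [Function.update_of_ne hk]
      exact Prod.ext rfl (Complex.conj_eq_iff_im.2 (ha k)).symm
  rw [hsplit, F.map_update_add, hreal, zero_add, F.map_update_smul] at hw
  exact right_ne_zero_of_mul hw

lemma exists_conj_frame {a : PlanarVec} (ha : a ≠ 0) (him : a.2.im = 0) :
    ∃ φ : PlanarVec ≃L[ℝ] PlanarVec, φ (1, 0) = a ∧ φ (0, Complex.I) = (0, Complex.I) ∧
      ∀ v, φ (planarIso Complex.conjLIE v) = planarIso Complex.conjLIE (φ v) := by
  have h : a.1 ^ 2 + a.2.re ^ 2 ≠ 0 := fun h ↦ by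
    rw [add_eq_zero_iff_of_nonneg (sq_nonneg _) (sq_nonneg _), sq_eq_zero_iff, sq_eq_zero_iff] at h
    exact ha (Prod.ext h.1 (Complex.ext h.2 him))
  exact ⟨realFrame h, Prod.ext (by simp [realFrame_apply]) (Complex.ext (by simp [realFrame_apply])
    (by simp [realFrame_apply, him])), Prod.ext (by simp [realFrame_apply])
    (Complex.ext (by simp [realFrame_apply]) (by simp [realFrame_apply])), realFrame_conj h⟩

lemma IsModel.isLocallyEuclideanAt_of_im_eq_zero (hψ : IsModel F ψ) {v : Config F}
    (hx : (v.1 0).2 ≠ 0) {w : PlanarVec} (hw : F (Function.update v.1 1 w) ≠ 0)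
    (him : ∀ k, (align (v.1 0).2 (v.1 k)).2.im = 0) : IsLocallyEuclideanAt 6 (ψ v) := by
  rw [← (hψ.map_align_eq_zero_iff hx).ne, align_update] at hw
  choose φ hφa hφI hφ using fun k ↦ exists_conj_frame (align_ne_zero hx (v.2.1 k)) (him k)
  have hfst (k : Fin 4) : 0 < ((φ k).symm (align (v.1 0).2 (v.1 k))).1 := by
    simp [← hφa k]
  have hpivot := hψ.pivot_ne_zero_of_im_eq_zero him hw
  rw [← hφI 1] at hpivot
  refine hψ.isLocallyEuclideanAt_of_mem_chartTarget (φ := Function.update φ 0 baseFrame)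
    (Function.update_self _ _ _) (by fun_prop : Continuous fun o : ChartSpace ↦ (o.1, o.2 ^ 2))
    (IsOpenMap.id.prodMap (Complex.isOpenQuotientMap_pow 2).isOpenMap)
    (fun o ho o' ho' ↦ hψ.sameShape_solve_iff_of_conj (Function.update_self _ _ _) ?_ ho ho')
    ⟨fun k ↦ ?_, hpivot⟩
  · intro k
    rcases eq_or_ne k 0 with rfl | hk
    · rw [Function.update_self]
      exact realFrame_conj _
    · rw [Function.update_of_ne hk]
      exact hφ k
  · rcases eq_or_ne k 0 with rfl | hk
    · rw [Function.update_self]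
      exact baseFrame_symm_align_self_pos hx
    · rw [Function.update_of_ne hk]
      exact hfst k

lemma exists_perm_map {i j : Fin 4} (hij : i ≠ j) :
    ∃ σ : Equiv.Perm (Fin 4), σ 0 = i ∧ σ 1 = j := by
  revert i j
  decide

lemma IsModel.isLocallyEuclideanAt_of_snd_zero_ne_zero (hψ : IsModel F ψ) {v : Config F}
    (hx : (v.1 0).2 ≠ 0) {w : PlanarVec} (hw : F (Function.update v.1 1 w) ≠ 0) :
    IsLocallyEuclideanAt 6 (ψ v) := by
  by_cases him : ∀ k, (align (v.1 0).2 (v.1 k)).2.im = 0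
  · exact hψ.isLocallyEuclideanAt_of_im_eq_zero hx hw him
  · obtain ⟨m, hm⟩ := not_forall.1 him
    exact hψ.isLocallyEuclideanAt_of_im_ne_zero hx hw hm

lemma IsModel.isLocallyEuclideanAt_of_snd_ne_zero (hψ : IsModel F ψ) {v : Config F} {i j : Fin 4}
    (hij : i ≠ j) (hx : (v.1 i).2 ≠ 0) {w : PlanarVec} (hw : F (Function.update v.1 j w) ≠ 0) :
    IsLocallyEuclideanAt 6 (ψ v) := by
  obtain ⟨τ, rfl, rfl⟩ := exists_perm_map hij
  have hw' : F.domDomCongr τ.symm (Function.update (v.1 ∘ τ) 1 w) ≠ 0 := by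
    have hcomp : Function.update (v.1 ∘ τ) 1 w ∘ τ.symm = Function.update v.1 (τ 1) w := by
      simp [Function.update_comp_equiv, Function.comp_assoc]
    exact (congrArg F hcomp).trans_ne hw
  simpa using (hψ.comp_permute τ.symm).isLocallyEuclideanAt_of_snd_zero_ne_zero
    (v := (permute τ.symm).symm v) hx hw'

end NonCentralPoints

section Nondegeneracy

/-- The nonzero quaternions up to real factors. -/
abbrev ProjQuaternion : Type := (Quaternion ℝ)ˣ ⧸ Subgroup.center (Quaternion ℝ)ˣ

lemma projQuaternion_eq_of_eq_smul {x y : (Quaternion ℝ)ˣ} {t : ℝ}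
    (h : (x : Quaternion ℝ) = t • (y : Quaternion ℝ)) : (x : ProjQuaternion) = y := by
  have ht : t ≠ 0 := fun ht ↦ x.ne_zero (by rw [h, ht, zero_smul])
  have hscalar : ((x⁻¹ * y : (Quaternion ℝ)ˣ) : Quaternion ℝ) = t⁻¹ • 1 := by
    rw [Units.val_mul, eq_inv_smul_iff₀ ht, ← mul_smul_comm, ← h, Units.inv_mul]
  rw [QuotientGroup.eq, Subgroup.mem_center_iff]
  intro g
  refine Units.ext ?_
  rw [Units.val_mul, Units.val_mul (x⁻¹ * y), hscalar, mul_smul_one, smul_one_mul]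

/-- The quaternion `k`. -/
def unitK : (Quaternion ℝ)ˣ := Units.mk0 ⟨0, 0, 0, 1⟩ fun h ↦ one_ne_zero (congrArg (·.imK) h)

@[simp] lemma unitK_re : (unitK : Quaternion ℝ).re = 0 := rfl
@[simp] lemma unitK_imI : (unitK : Quaternion ℝ).imI = 0 := rfl
@[simp] lemma unitK_imJ : (unitK : Quaternion ℝ).imJ = 0 := rfl
@[simp] lemma unitK_imK : (unitK : Quaternion ℝ).imK = 1 := rfl

/-- A nonzero planar quaternion as a unit. -/
def planarUnit (v : PlanarVec) (hv : v ≠ 0) : (Quaternion ℝ)ˣ :=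
  Units.mk0 (toQuaternion v) (toQuaternion_ne_zero hv)

lemma snd_eq_zero_of_planarUnit_central {v : PlanarVec} {hv : v ≠ 0}
    (h : (planarUnit v hv : ProjQuaternion) = 1) : v.2 = 0 := by
  rw [QuotientGroup.eq_one_iff, Subgroup.mem_center_iff] at h
  have hcomm (w : PlanarVec) (hw : w ≠ 0) : (toQuaternion w * toQuaternion v).imK =
      (toQuaternion v * toQuaternion w).imK :=
    congrArg (fun q : (Quaternion ℝ)ˣ ↦ (q : Quaternion ℝ).imK) (h (planarUnit w hw))
  have hi := hcomm (0, 1) (by simp)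
  have hj := hcomm (0, Complex.I) (by simp)
  simp only [Quaternion.imK_mul, toQuaternion_re, toQuaternion_imI, toQuaternion_imJ,
    toQuaternion_imK, Complex.one_re, Complex.one_im, Complex.I_re, Complex.I_im, zero_mul,
    mul_zero, one_mul, mul_one, zero_add, add_zero, zero_sub, sub_zero] at hi hj
  exact Complex.ext (by simp; linarith) (by simp; linarith)

lemma mul_unitK_mul_of_imK_eq_zero {A B : (Quaternion ℝ)ˣ}
    (h : ∀ w, ((A : Quaternion ℝ) * toQuaternion w * B).imK = 0) :
    (B * unitK * A : ProjQuaternion) = unitK := by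
  have h₁ := h (1, 0)
  have hi := h (0, 1)
  have hj := h (0, Complex.I)
  refine projQuaternion_eq_of_eq_smul (x := B * unitK * A)
    (t := (B * unitK * A : Quaternion ℝ).imK) ?_
  simp only [Quaternion.re_mul, Quaternion.imI_mul, Quaternion.imJ_mul, Quaternion.imK_mul,
    toQuaternion_re, toQuaternion_imI, toQuaternion_imJ, toQuaternion_imK, Complex.zero_re,
    Complex.zero_im, Complex.one_re, Complex.one_im, Complex.I_re, Complex.I_im] at h₁ hi hj
  ext <;> simp only [Units.val_mul, Quaternion.re_mul, Quaternion.imI_mul, Quaternion.imJ_mul,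
    Quaternion.imK_mul, Quaternion.re_smul, Quaternion.imI_smul, Quaternion.imJ_smul,
    Quaternion.imK_smul, unitK_re, unitK_imI, unitK_imJ, unitK_imK, smul_eq_mul,
    mul_one]
  · linear_combination -h₁
  · linear_combination hi
  · linear_combination hj

lemma planarUnit_mul_unitK (v : PlanarVec) (hv : v ≠ 0) :
    (planarUnit v hv * unitK : ProjQuaternion) = unitK * (planarUnit v hv : ProjQuaternion)⁻¹ := by
  have hstar : toQuaternion v * unitK = unitK * star (toQuaternion v) := by
    ext <;> simp
  have hinv : star (toQuaternion v) =
      Quaternion.normSq (toQuaternion v) • (toQuaternion v)⁻¹ := by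
    rw [Quaternion.inv_def, smul_inv_smul₀ (Quaternion.normSq_ne_zero.2 (toQuaternion_ne_zero hv))]
  refine projQuaternion_eq_of_eq_smul (x := planarUnit v hv * unitK)
    (y := unitK * (planarUnit v hv)⁻¹) (t := Quaternion.normSq (toQuaternion v)) ?_
  rw [Units.val_mul, planarUnit, Units.val_mk0, hstar, hinv, Units.val_mul, mul_smul_comm,
    Units.val_inv_eq_inv_val, Units.val_mk0]

lemma eq_one_of_words {G : Type*} [Group G] {a b c d : G} (i : Fin 4)
    (h₀ : i ≠ 0 → b * c * d = 1) (h₁ : i ≠ 1 → a = d * c) (h₂ : i ≠ 2 → a * b = d)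
    (h₃ : i ≠ 3 → a * b * c = 1) : ![a, b, c, d] i = 1 := by
  fin_cases i
  · calc a = d * c := h₁ (by decide)
      _ = a * b * c := by rw [h₂ (by decide)]
      _ = 1 := h₃ (by decide)
  · have hcd : c * d = 1 := by rw [mul_eq_one_comm, ← h₂ (by decide), h₃ (by decide)]
    calc b = b * c * d := by rw [mul_assoc, hcd, mul_one]
      _ = 1 := h₀ (by decide)
  · have hdbc : d * (b * c) = 1 := mul_eq_one_comm.1 (h₀ (by decide))
    have hdcbc : d * (c * (b * c)) = 1 := by
      rw [← h₃ (by decide), h₁ (by decide), mul_assoc, mul_assoc]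
    exact mul_eq_right.1 (mul_left_cancel (hdcbc.trans hdbc.symm))
  · have hcb : c * b = 1 := by
      rw [← mul_eq_left (a := d), ← mul_assoc, ← h₁ (by decide), h₂ (by decide)]
    calc d = b * c * d := by rw [mul_eq_one_comm.1 hcb, one_mul]
      _ = 1 := h₀ (by decide)

lemma exists_relatorForm_update_ne_zero (v : Config relatorForm) {i : Fin 4}
    (hi : (v.1 i).2 ≠ 0) : ∃ j ≠ i, ∃ w, relatorForm (Function.update v.1 j w) ≠ 0 := by
  by_contra! h
  let u (j : Fin 4) : (Quaternion ℝ)ˣ := planarUnit (v.1 j) (v.2.1 j)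
  have hk (j : Fin 4) : (u j * unitK : ProjQuaternion) = unitK * (u j : ProjQuaternion)⁻¹ :=
    planarUnit_mul_unitK _ _
  have h₀ (hi : i ≠ 0) : (u 1 * u 2 * u 3 : ProjQuaternion) = 1 := by
    have h := mul_unitK_mul_of_imK_eq_zero (A := 1) (B := u 1 * u 2 * u 3) fun w ↦ by
      simpa [relatorForm_apply, u, planarUnit, mul_assoc] using h 0 hi.symm w
    simpa using h
  have h₁ (hi : i ≠ 1) : (u 0 : ProjQuaternion) = u 3 * u 2 := by
    have h := mul_unitK_mul_of_imK_eq_zero (A := u 0) (B := u 2 * u 3) fun w ↦ by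
      simpa [relatorForm_apply, u, planarUnit, mul_assoc] using h 1 hi.symm w
    rw [QuotientGroup.mk_mul, mul_assoc (u 2 : ProjQuaternion), hk, ← mul_assoc, hk, mul_assoc,
      mul_assoc, mul_eq_left, ← mul_assoc, ← mul_inv_rev, inv_mul_eq_one] at h
    exact h.symm
  have h₂ (hi : i ≠ 2) : (u 0 * u 1 : ProjQuaternion) = u 3 := by
    have h := mul_unitK_mul_of_imK_eq_zero (A := u 0 * u 1) (B := u 3) fun w ↦ by
      simpa [relatorForm_apply, u, planarUnit, mul_assoc] using h 2 hi.symm w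
    rw [hk, mul_assoc, mul_eq_left, inv_mul_eq_one] at h
    exact h.symm
  have h₃ (hi : i ≠ 3) : (u 0 * u 1 * u 2 : ProjQuaternion) = 1 := by
    have h := mul_unitK_mul_of_imK_eq_zero (A := u 0 * u 1 * u 2) (B := 1) fun w ↦ by
      simpa [relatorForm_apply, u, planarUnit, mul_assoc] using h 3 hi.symm w
    simpa using h
  have hone := eq_one_of_words i h₀ h₁ h₂ h₃
  refine hi ?_
  fin_cases i <;> exact snd_eq_zero_of_planarUnit_central hone

end Nondegeneracy

lemma isLocallyEuclideanAt_chiF2 (p : ChiF2) : IsLocallyEuclideanAt 6 p := by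
  obtain ⟨v, rfl⟩ := isQuotientMap_configClass.surjective p
  by_cases hcentral : ∀ i, (v.1 i).2 = 0
  · exact isModel_configClass.isLocallyEuclideanAt_of_central hcentral
  · obtain ⟨i, hi⟩ := not_forall.1 hcentral
    obtain ⟨j, hj, w, hw⟩ := exists_relatorForm_update_ne_zero v hi
    exact isModel_configClass.isLocallyEuclideanAt_of_snd_ne_zero hj.symm hi hw

/-- `χ(F₂)` is a compact Hausdorff space in which every point has an open neighborhood
homeomorphic to `ℝ⁶`; i.e. `χ(F₂)` is a closed topological 6-manifold. -/
theorem chiF2_is_closed_topological_six_manifold :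
    CompactSpace ChiF2 ∧ T2Space ChiF2 ∧
      ∀ x : ChiF2, ∃ U : Set ChiF2, x ∈ U ∧ IsOpen U ∧ Nonempty (U ≃ₜ (Fin 6 → ℝ)) :=
  ⟨inferInstance, inferInstance, isLocallyEuclideanAt_chiF2⟩
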